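/- arXiv:1610.00203 — 3 statements merged into one kernel-verified Lean document; each statement's English description precedes it below -/
import Mathlib

section
/- Behavior of the corrector ψ. Assume (W), let φ be the layer solution, let L ∈ ℝ, and let ψ be a bounded C^{3,β} solution of the corrector equation −(−Δ)^s ψ = W''(φ)ψ + (L/W''(0))(W''(φ) − W''(0)) + cφ' on ℝ with ψ(x) → 0 as x → ±∞, where c = L/∫_ℝ(φ')². Then there exist constants K₂ and K₃ > 0 (depending on L) such that: if s ≥ 1/2, |ψ(x) − K₂ x/|x|^{1+2s}| ≤ K₃/|x|^{1+2s} for all |x| ≥ 1; and, for every s ∈ (0,1) and all x ∈ ℝ, |ψ'(x)| ≤ K₃/(1+|x|^{1+2s}) and |ψ''(x)| ≤ K₃/(1+|x|^{1+2s}). -/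
/-!
On bounded `C²` functions the principal value `fracLap` equals `C(1,s)` times the absolutely
convergent integral `FL` of second differences (`fracLap_eq`), so everything is done with `FL`.

*Decay.* The barrier `bar s x = (1+x²)^{-1/2-s}` satisfies `FL (bar) ≤ C bar` (`FL_bar_le`). After a
dilation by a small factor the constant becomes as small as desired, and the maximum principle
gives `decay`: a function vanishing at infinity and solving `-(-Δ)^s v = a v + O(bar)` with
`a ≥ a₀ > 0` outside a compact set is `O(bar)`. Applied to difference quotients, uniformly in the
increment, this bounds derivatives (`deriv_decay`). Since `W''(φ(x)) → W''(0) > 0` at `±∞`, the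
equations for `φ` and `ψ` and their differentiated forms yield successively `φ', φ'', φ''' = O(bar)`
(`layerData_exists`) and `ψ', ψ'' = O(bar)` (`corrector_deriv_decay`).

*Asymptotics for `s ≥ 1/2`.* Let `oddProf s x = x (1+x²)^{-1/2-s}`, which differs from
`x/|x|^{1+2s}` by `O(|x|^{-1-2s})` (`oddProf_sub_le`). Its `FL` is `O(bar)` far away (`FL_oddProf`):
the mass of the profile near the origin, seen from `x`, cancels by oddness. A smooth step from `0`
to `1` has `FL = -oddProf/(2s) + O(bar)` (`FL_step`). With `α = W''(0)` and `κ = C(1,s)/(2sα)`,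
a Taylor expansion of `W'` and `decay` give `φ = step - κ oddProf + O(bar)` (`layer_asymp`); the
quadratic remainders are `O(|x|^{-4s})`, which is `O(bar)` exactly because `s ≥ 1/2`. Inserting this
in `W''(φ) - W''(0)` and choosing `K₂ = L W'''(0) κ / α²`, the difference `ψ - K₂ oddProf` solves an
equation with right-hand side `O(bar)`, hence is `O(bar)` (`corrector_asymp`).
-/

open MeasureTheory Filter Metric Set

noncomputable section

/-- The normalizing constant `C(1,s) = 4^s Γ(1/2+s) / (√π |Γ(−s)|)` of the fractional
Laplacian in dimension one. -/
noncomputable def C1s (s : ℝ) : ℝ :=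
  4 ^ s * Real.Gamma (1/2 + s) / (Real.sqrt Real.pi * |Real.Gamma (-s)|)

/-- `I^{1,r}[φ,x] = C(1,s) ∫_{|z|≤r} (φ(x+z) − φ(x) − φ'(x)z)|z|^{−1−2s} dz`. -/
noncomputable def fracI1 (s : ℝ) (φ : ℝ → ℝ) (r x : ℝ) : ℝ :=
  C1s s * ∫ z in {z : ℝ | |z| ≤ r}, (φ (x + z) - φ x - deriv φ x * z) / |z| ^ (1 + 2*s)

/-- `I^{2,r}[u,x] = C(1,s) ∫_{|z|>r} (u(x+z) − u(x))|z|^{−1−2s} dz`. -/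
noncomputable def fracI2 (s : ℝ) (u : ℝ → ℝ) (r x : ℝ) : ℝ :=
  C1s s * ∫ z in {z : ℝ | r < |z|}, (u (x + z) - u x) / |z| ^ (1 + 2*s)

/-- The one-dimensional fractional Laplacian `−(−Δ)^s u (x)`, defined as a principal value. -/
noncomputable def fracLap (s : ℝ) (u : ℝ → ℝ) (x : ℝ) : ℝ :=
  limUnder (nhdsWithin 0 (Ioi (0:ℝ)))
    (fun ρ => C1s s * ∫ y in {y : ℝ | ρ < |y|}, (u (x + y) - u x) / |y| ^ (1 + 2*s))

/-- The Heaviside function. -/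
noncomputable def heav (x : ℝ) : ℝ := if 0 ≤ x then 1 else 0

/-- Assumption (W): `W ∈ C^{4,β}(ℝ)` for some `β ∈ (0,1)`, 1-periodic, vanishing exactly on
`ℤ`, with `α = W''(0) > 0`, and even if `s < 1/2`. -/
def WAssump (s : ℝ) (W : ℝ → ℝ) : Prop :=
  (∃ β : ℝ, β ∈ Set.Ioo (0:ℝ) 1 ∧ ContDiff ℝ 4 W ∧
    ∃ Cβ : ℝ, ∀ x y : ℝ, |iteratedDeriv 4 W x - iteratedDeriv 4 W y| ≤ Cβ * |x - y| ^ β) ∧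
  (∀ v : ℝ, W (v + 1) = W v) ∧
  (∀ k : ℤ, W (k : ℝ) = 0) ∧
  (∀ v : ℝ, (∀ k : ℤ, (k : ℝ) ≠ v) → 0 < W v) ∧
  0 < iteratedDeriv 2 W 0 ∧
  (s < 1/2 → ∀ v : ℝ, W (-v) = W v)

/-- `φ` is the layer solution: `−(−Δ)^s φ = W'(φ)`, `φ' > 0`, `φ(−∞)=0`, `φ(+∞)=1`,
`φ(0)=1/2` (it is of class `C^{4,β}`). -/
def IsLayerSolution (s : ℝ) (W φ : ℝ → ℝ) : Prop :=
  ContDiff ℝ 4 φ ∧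
  (∀ x, fracLap s φ x = deriv W (φ x)) ∧
  (∀ x, 0 < deriv φ x) ∧
  Tendsto φ atBot (nhds 0) ∧ Tendsto φ atTop (nhds 1) ∧ φ 0 = 1/2

/-- `ψ` is the (bounded, `C^{3,β}`) corrector associated with `L`:
`−(−Δ)^s ψ = W''(φ)ψ + (L/W''(0))(W''(φ) − W''(0)) + cφ'` with `c = L/∫(φ')²` and
`ψ(±∞) = 0`. -/
def IsCorrector (s L : ℝ) (W φ ψ : ℝ → ℝ) : Prop :=
  ContDiff ℝ 3 ψ ∧ (∃ M, ∀ x, |ψ x| ≤ M) ∧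
  (∀ x, fracLap s ψ x =
    iteratedDeriv 2 W (φ x) * ψ x +
    (L / iteratedDeriv 2 W 0) * (iteratedDeriv 2 W (φ x) - iteratedDeriv 2 W 0) +
    (L / ∫ y : ℝ, (deriv φ y) ^ 2) * deriv φ x) ∧
  Tendsto ψ atBot (nhds 0) ∧ Tendsto ψ atTop (nhds 0)

/-- A smooth cutoff `τ` with `0 ≤ τ ≤ 1`, `τ = 1` on `[−R,R]`, `τ = 0` outside `[−2R,2R]`. -/
def IsCutoff (R : ℝ) (τc : ℝ → ℝ) : Prop :=
  ContDiff ℝ (⊤ : ℕ∞) τc ∧ (∀ x, 0 ≤ τc x ∧ τc x ≤ 1) ∧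
  (∀ x : ℝ, |x| ≤ R → τc x = 1) ∧ (∀ x : ℝ, 2*R ≤ |x| → τc x = 0)

/-- The ansatz `s_{δ,n}^L(x) = δ^{2s}L/α + Σ_{i=−n}^n φ(x_i) − n + δ^{2s} Σ_{i=−n}^n ψ(x_i)τ(x_i)`
with `x_i = (x−i)/(δ|p₀|)` (the case `s ≥ 1/2` corresponds to `τ ≡ 1`). -/
noncomputable def ansatz (s : ℝ) (φ ψ τc : ℝ → ℝ) (α L p₀ δ : ℝ) (n : ℕ) (x : ℝ) : ℝ :=
  δ ^ (2*s) * L / α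
    + (∑ i ∈ Finset.Icc (-(n:ℤ)) (n:ℤ), φ ((x - i) / (δ * |p₀|))) - n
    + δ ^ (2*s) *
        ∑ i ∈ Finset.Icc (-(n:ℤ)) (n:ℤ),
          ψ ((x - i) / (δ * |p₀|)) * τc ((x - i) / (δ * |p₀|))

/-- The nonlinear operator `NL_L^λ[h] = λh' − δ^{2s}L − δ^{2s}|p₀|^{2s}(−(−Δ)^s h) + W'(h)`. -/
noncomputable def NLop (s δ p₀ L lam : ℝ) (W h : ℝ → ℝ) (x : ℝ) : ℝ :=
  lam * deriv h x - δ ^ (2*s) * L - δ ^ (2*s) * |p₀| ^ (2*s) * fracLap s h x + deriv W (h x)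

end

/-! ### The symmetrized fractional Laplacian -/

/-- Second symmetric difference `u (x+y) + u (x-y) - 2 u x`. -/
def sd (u : ℝ → ℝ) (x y : ℝ) : ℝ := u (x + y) + u (x - y) - 2 * u x

/-- The symmetrized, absolutely convergent form of the fractional Laplacian, without its
normalizing constant. -/
noncomputable def FL (s : ℝ) (u : ℝ → ℝ) (x : ℝ) : ℝ :=
  ∫ y in Ioi (0:ℝ), sd u x y * y ^ (-(1 + 2*s))

/-- The integrable majorant `min(1, y²) y^{-1-2s}` of second differences against the kernel. -/
noncomputable def kerMaj (s y : ℝ) : ℝ := min 1 (y ^ 2) * y ^ (-(1 + 2*s))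

/-- Bounded functions of class `C²`, on which the fractional Laplacian is well defined. -/
def Nice (u : ℝ → ℝ) : Prop := ContDiff ℝ 2 u ∧ ∃ M, ∀ x, |u x| ≤ M

lemma C1s_pos {s : ℝ} (hs : s ∈ Ioo (0:ℝ) 1) : 0 < C1s s := by
  obtain ⟨h0, h1⟩ := hs
  have h2 : Real.Gamma (-s) ≠ 0 := by
    apply Real.Gamma_ne_zero
    intro m hm
    have hm' : s = m := by linarith
    rcases Nat.eq_zero_or_pos m with h | h
    · subst h; simp at hm'; linarith
    · have : (1:ℝ) ≤ m := by exact_mod_cast h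
      linarith
  have h3 : 0 < Real.Gamma (1/2 + s) := Real.Gamma_pos_of_pos (by linarith)
  have h4 : 0 < |Real.Gamma (-s)| := abs_pos.2 h2
  have h5 : 0 < Real.sqrt Real.pi := Real.sqrt_pos.2 Real.pi_pos
  unfold C1s
  positivity

lemma kerMaj_nonneg (s : ℝ) {y : ℝ} (hy : 0 < y) : 0 ≤ kerMaj s y := by
  unfold kerMaj; positivity

lemma kerMaj_integrable {s : ℝ} (hs : s ∈ Ioo (0:ℝ) 1) : IntegrableOn (kerMaj s) (Ioi 0) := by
  obtain ⟨h0, h1⟩ := hs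
  rw [← Ioc_union_Ioi_eq_Ioi (zero_le_one' ℝ)]
  refine IntegrableOn.union ?_ ?_
  · have h : IntegrableOn (fun y : ℝ => y ^ (1 - 2*s)) (Ioc 0 1) := by
      have := intervalIntegral.intervalIntegrable_rpow' (a := 0) (b := 1)
        (r := 1 - 2*s) (by linarith)
      rwa [intervalIntegrable_iff_integrableOn_Ioc_of_le zero_le_one] at this
    refine h.congr_fun ?_ measurableSet_Ioc
    rintro y ⟨hy0, hy1⟩
    have e : y ^ 2 ≤ 1 := by nlinarith
    simp only [kerMaj]
    rw [min_eq_right e, ← Real.rpow_natCast y 2, ← Real.rpow_add hy0]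
    congr 1; push_cast; ring
  · have h : IntegrableOn (fun y : ℝ => y ^ (-(1 + 2*s))) (Ioi 1) :=
      integrableOn_Ioi_rpow_of_lt (by linarith) one_pos
    refine h.congr_fun ?_ measurableSet_Ioi
    intro y hy
    have hy' : (1:ℝ) < y := hy
    have e : 1 ≤ y ^ 2 := by nlinarith
    simp only [kerMaj]
    rw [min_eq_left e, one_mul]

lemma sd_le {u : ℝ → ℝ} (hu : ContDiff ℝ 2 u) {x y B : ℝ} (hy : 0 ≤ y)
    (hB : ∀ t ∈ Icc (x - y) (x + y), |deriv (deriv u) t| ≤ B) :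
    |sd u x y| ≤ 2 * B * y ^ 2 := by
  have hd1 : Differentiable ℝ u := hu.differentiable (by norm_num)
  have hd2 : Differentiable ℝ (deriv u) :=
    ((contDiff_succ_iff_deriv (n := 1)).1 hu).2.2.differentiable (by norm_num)
  have hB0 : 0 ≤ B := (abs_nonneg _).trans (hB x ⟨by linarith, by linarith⟩)
  have h1 : ∀ t ∈ Icc 0 y, |deriv u (x + t) - deriv u (x - t)| ≤ B * (2 * y) := by
    rintro t ⟨ht0, ht1⟩
    have := (convex_Icc (x - y) (x + y)).norm_image_sub_le_of_norm_deriv_le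
      (f := deriv u) (C := B) (x := x - t) (y := x + t) (fun z _ => hd2 z)
      (fun z hz => hB z hz) ⟨by linarith, by linarith⟩ ⟨by linarith, by linarith⟩
    simp only [Real.norm_eq_abs] at this
    refine this.trans (mul_le_mul_of_nonneg_left ?_ hB0)
    rw [abs_le]; constructor <;> linarith
  have hF : ∀ t, HasDerivAt (fun t => u (x + t) + u (x - t))
      (deriv u (x + t) - deriv u (x - t)) t := by
    intro t
    have a1 : HasDerivAt (fun t => u (x + t)) (deriv u (x + t)) t := by
      simpa using (hd1 (x + t)).hasDerivAt.comp_const_add x t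
    have a2 : HasDerivAt (fun t => u (x - t)) (-deriv u (x - t)) t := by
      simpa using (hd1 (x - t)).hasDerivAt.comp_const_sub x t
    rw [sub_eq_add_neg]
    exact a1.add a2
  have := (convex_Icc (0:ℝ) y).norm_image_sub_le_of_norm_hasDerivWithin_le
      (C := B * (2*y)) (x := 0) (y := y) (fun t _ => (hF t).hasDerivWithinAt)
      (fun t ht => h1 t ht) ⟨le_rfl, hy⟩ ⟨hy, le_rfl⟩
  simp only [Real.norm_eq_abs, add_zero, sub_zero, abs_of_nonneg hy] at this
  have e : sd u x y = u (x + y) + u (x - y) - (u x + u x) := by unfold sd; ring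
  rw [e]; linarith

lemma sd_ker_bound (s : ℝ) {u : ℝ → ℝ} (hu : Nice u) (x : ℝ) :
    ∃ D, ∀ ξ ∈ Icc (x - 1) (x + 1), ∀ y, 0 < y →
      |sd u ξ y * y ^ (-(1 + 2*s))| ≤ D * kerMaj s y := by
  obtain ⟨hu, M, hM⟩ := hu
  have hc : Continuous (deriv (deriv u)) :=
    ((contDiff_succ_iff_deriv (n := 1)).1 hu).2.2.continuous_deriv (by norm_num)
  obtain ⟨B, hB⟩ := isCompact_Icc.exists_bound_of_continuousOn
    (s := Icc (x - 2) (x + 2)) hc.continuousOn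
  refine ⟨max (2 * B) (4 * M), fun ξ hξ y hy => ?_⟩
  rw [abs_mul, abs_of_pos (Real.rpow_pos_of_pos hy _), kerMaj, ← mul_assoc]
  refine mul_le_mul_of_nonneg_right ?_ (Real.rpow_pos_of_pos hy _).le
  rcases le_total y 1 with h | h
  · rw [min_eq_right (by nlinarith)]
    refine (sd_le hu hy.le (B := B) ?_).trans
      (mul_le_mul_of_nonneg_right (le_max_left _ _) (sq_nonneg y))
    intro t ht
    exact hB t ⟨by linarith [ht.1, hξ.1], by linarith [ht.2, hξ.2]⟩
  · rw [min_eq_left (by nlinarith), mul_one]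
    refine le_trans ?_ (le_max_right _ _)
    have a1 := abs_le.1 (hM (ξ + y))
    have a2 := abs_le.1 (hM (ξ - y))
    have a3 := abs_le.1 (hM ξ)
    unfold sd
    rw [abs_le]; constructor <;> linarith [a1.1, a1.2, a2.1, a2.2, a3.1, a3.2]

lemma sd_meas (s : ℝ) {u : ℝ → ℝ} (hu : Continuous u) (x : ℝ) {c : ℝ} (hc : 0 ≤ c) :
    AEStronglyMeasurable (fun y => sd u x y * y ^ (-(1 + 2*s))) (volume.restrict (Ioi c)) := by
  refine ContinuousOn.aestronglyMeasurable ?_ measurableSet_Ioi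
  refine ContinuousOn.mul (by unfold sd; fun_prop) ?_
  intro y hy
  exact (Real.continuousAt_rpow_const y _ (Or.inl (hc.trans_lt hy).ne')).continuousWithinAt

lemma FL_integrable {s : ℝ} (hs : s ∈ Ioo (0:ℝ) 1) {u : ℝ → ℝ} (hu : Nice u) (x : ℝ) :
    IntegrableOn (fun y => sd u x y * y ^ (-(1 + 2*s))) (Ioi 0) := by
  obtain ⟨D, hD⟩ := sd_ker_bound s hu x
  refine Integrable.mono' ((kerMaj_integrable hs).const_mul D) (sd_meas s hu.1.continuous x le_rfl) ?_
  refine (ae_restrict_mem measurableSet_Ioi).mono fun y hy => ?_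
  exact hD x ⟨by linarith, by linarith⟩ y hy

/-- On bounded `C²` functions the principal value defining `fracLap` exists and equals the
symmetrized integral. -/
lemma fracLap_eq {s : ℝ} (hs : s ∈ Ioo (0:ℝ) 1) {u : ℝ → ℝ} (hu : Nice u) (x : ℝ) :
    fracLap s u x = C1s s * FL s u x := by
  have hint := FL_integrable hs hu x
  have key : ∀ ρ : ℝ, 0 < ρ → ∫ y in {y : ℝ | ρ < |y|}, (u (x + y) - u x) / |y| ^ (1 + 2*s)
      = ∫ y in Ioi ρ, sd u x y * y ^ (-(1 + 2*s)) := by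
    intro ρ hρ
    set f : ℝ → ℝ := fun y => (u (x + y) - u x) / |y| ^ (1 + 2*s) with hf
    have hset : {y : ℝ | ρ < |y|} = Ioi ρ ∪ Iio (-ρ) := by
      ext y; simp only [mem_ofPred_eq, mem_union, mem_Ioi, mem_Iio, lt_abs]
      constructor <;> rintro (h | h) <;> [left; right; left; right] <;> linarith
    obtain ⟨M, hM⟩ := hu.2
    have hpow : IntegrableOn (fun y : ℝ => 2 * M * y ^ (-(1 + 2*s))) (Ioi ρ) :=
      (integrableOn_Ioi_rpow_of_lt (by linarith [hs.1]) hρ).const_mul _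
    have hsub : ∀ z, |u z - u x| ≤ 2 * M := fun z => by
      have a1 := abs_le.1 (hM z)
      have a3 := abs_le.1 (hM x)
      rw [abs_le]; constructor <;> linarith [a1.1, a1.2, a3.1, a3.2]
    have hcu := hu.1.continuous
    have gen : ∀ g : ℝ → ℝ, Continuous g → (∀ y, |g y| ≤ 2 * M) →
        IntegrableOn (fun y => g y * y ^ (-(1 + 2*s))) (Ioi ρ) := by
      intro g hg hgb
      refine Integrable.mono' hpow ?_ ?_
      · refine ContinuousOn.aestronglyMeasurable ?_ measurableSet_Ioi
        refine hg.continuousOn.mul ?_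
        intro y hy
        exact (Real.continuousAt_rpow_const y _ (Or.inl (hρ.trans hy).ne')).continuousWithinAt
      · refine (ae_restrict_mem measurableSet_Ioi).mono fun y hy => ?_
        have hy0 : 0 < y := hρ.trans hy
        rw [norm_mul, Real.norm_eq_abs, Real.norm_eq_abs, abs_of_pos (Real.rpow_pos_of_pos hy0 _)]
        exact mul_le_mul_of_nonneg_right (hgb y) (Real.rpow_pos_of_pos hy0 _).le
    have g1 := gen (fun y => u (x + y) - u x) (by fun_prop) (fun y => hsub _)
    have g2 := gen (fun y => u (x - y) - u x) (by fun_prop) (fun y => hsub _)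
    have e1 : EqOn (fun y => (u (x + y) - u x) * y ^ (-(1 + 2*s))) f (Ioi ρ) := by
      intro y hy
      have hy0 : 0 < y := hρ.trans hy
      simp only [hf, abs_of_pos hy0, Real.rpow_neg hy0.le, div_eq_mul_inv]
    have e2 : EqOn (fun y => (u (x - y) - u x) * y ^ (-(1 + 2*s))) (fun y => f (-y)) (Ioi ρ) := by
      intro y hy
      have hy0 : 0 < y := hρ.trans hy
      simp only [hf, abs_neg, abs_of_pos hy0, Real.rpow_neg hy0.le, div_eq_mul_inv, sub_eq_add_neg]
    have i1 : IntegrableOn f (Ioi ρ) := g1.congr_fun e1 measurableSet_Ioi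
    have i2' : IntegrableOn (fun y => f (-y)) (Ioi ρ) := g2.congr_fun e2 measurableSet_Ioi
    have i2 : IntegrableOn f (Iio (-ρ)) := by
      have := (Measure.measurePreserving_neg (volume : Measure ℝ)).integrableOn_comp_preimage
        (Homeomorph.neg ℝ).measurableEmbedding (f := f) (s := Iio (-ρ))
      apply this.1
      simpa [Function.comp_def] using i2'
    rw [hset, setIntegral_union (by
      rw [Set.disjoint_left]; intro y h1 h2
      simp only [mem_Ioi, mem_Iio] at h1 h2; linarith) measurableSet_Iio i1 i2]
    rw [← integral_Iic_eq_integral_Iio, ← integral_comp_neg_Ioi,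
      ← setIntegral_congr_fun measurableSet_Ioi e1, ← setIntegral_congr_fun measurableSet_Ioi e2,
      ← integral_add g1 g2]
    refine integral_congr_ae (Eventually.of_forall fun y => ?_)
    simp only [sd]; ring
  have hcov : AECover (volume.restrict (Ioi (0:ℝ))) (nhdsWithin 0 (Ioi (0:ℝ)))
      (fun ρ : ℝ => Ioi ρ) := aecover_Ioi_of_Ioi (tendsto_id.mono_left nhdsWithin_le_nhds)
  have ht := hcov.integral_tendsto_of_countably_generated hint
  unfold fracLap
  refine Tendsto.limUnder_eq ?_
  have : Tendsto (fun ρ : ℝ => C1s s * ∫ y in Ioi ρ, sd u x y * y ^ (-(1 + 2*s)))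
      (nhdsWithin 0 (Ioi (0:ℝ))) (nhds (C1s s * FL s u x)) := by
    refine Tendsto.const_mul _ (ht.congr' ?_)
    filter_upwards [self_mem_nhdsWithin] with ρ hρ
    rw [Measure.restrict_restrict measurableSet_Ioi, inter_eq_left.2 (Ioi_subset_Ioi (le_of_lt hρ))]
  refine this.congr' ?_
  filter_upwards [self_mem_nhdsWithin] with ρ hρ
  rw [key ρ hρ]

/-- The fractional Laplacian commutes with differentiation. -/
lemma FL_hasDerivAt {s : ℝ} (hs : s ∈ Ioo (0:ℝ) 1) {u : ℝ → ℝ} (hu : Nice u)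
    (hu' : Nice (deriv u)) (x : ℝ) : HasDerivAt (FL s u) (FL s (deriv u) x) x := by
  obtain ⟨D, hD⟩ := sd_ker_bound s hu' x
  have hd : Differentiable ℝ u := hu.1.differentiable (by norm_num)
  refine (hasDerivAt_integral_of_dominated_loc_of_deriv_le
    (F := fun ξ y => sd u ξ y * y ^ (-(1 + 2*s)))
    (F' := fun ξ y => sd (deriv u) ξ y * y ^ (-(1 + 2*s)))
    (s := Icc (x - 1) (x + 1)) (bound := fun y => D * kerMaj s y)
    (Icc_mem_nhds (by linarith) (by linarith))
    (Eventually.of_forall fun ξ => sd_meas s hu.1.continuous ξ le_rfl)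
    (FL_integrable hs hu x) (sd_meas s hu'.1.continuous x le_rfl) ?_
    ((kerMaj_integrable hs).const_mul D) ?_).2
  · refine (ae_restrict_mem measurableSet_Ioi).mono fun y hy ξ hξ => hD ξ hξ y hy
  · refine Eventually.of_forall fun y ξ _ => HasDerivAt.mul_const ?_ _
    unfold sd
    have a1 : HasDerivAt (fun ξ => u (ξ + y)) (deriv u (ξ + y)) ξ := by
      simpa using (hd (ξ + y)).hasDerivAt.comp_add_const ξ y
    have a2 : HasDerivAt (fun ξ => u (ξ - y)) (deriv u (ξ - y)) ξ := by
      simpa using (hd (ξ - y)).hasDerivAt.comp_sub_const ξ y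
    exact (a1.add a2).sub ((hd ξ).hasDerivAt.const_mul 2)

lemma Nice.lin {u v : ℝ → ℝ} (hu : Nice u) (hv : Nice v) (a b : ℝ) :
    Nice (fun x => a * u x + b * v x) := by
  obtain ⟨h1, M, hM⟩ := hu
  obtain ⟨h2, N, hN⟩ := hv
  refine ⟨(contDiff_const.mul h1).add (contDiff_const.mul h2), |a| * M + |b| * N, fun x => ?_⟩
  refine (abs_add_le _ _).trans ?_
  rw [abs_mul, abs_mul]
  exact add_le_add (mul_le_mul_of_nonneg_left (hM x) (abs_nonneg a))
    (mul_le_mul_of_nonneg_left (hN x) (abs_nonneg b))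

lemma FL_lin {s : ℝ} (hs : s ∈ Ioo (0:ℝ) 1) {u v : ℝ → ℝ} (hu : Nice u) (hv : Nice v)
    (a b x : ℝ) : FL s (fun x => a * u x + b * v x) x = a * FL s u x + b * FL s v x := by
  unfold FL
  rw [← integral_const_mul, ← integral_const_mul,
    ← integral_add ((FL_integrable hs hu x).const_mul a) ((FL_integrable hs hv x).const_mul b)]
  refine integral_congr_ae (Eventually.of_forall fun y => ?_)
  simp only [sd]; ring

lemma Nice.comp_affine {u : ℝ → ℝ} (hu : Nice u) (a b : ℝ) : Nice (fun x => u (a * x + b)) := by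
  obtain ⟨h1, M, hM⟩ := hu
  exact ⟨h1.comp (by fun_prop), M, fun x => hM _⟩

lemma FL_shift (s : ℝ) (u : ℝ → ℝ) (h x : ℝ) : FL s (fun x => u (x + h)) x = FL s u (x + h) := by
  unfold FL sd
  refine integral_congr_ae (Eventually.of_forall fun y => ?_)
  simp only
  rw [show x + y + h = x + h + y by ring, show x - y + h = x + h - y by ring]

lemma FL_scale (s : ℝ) (u : ℝ → ℝ) {ε : ℝ} (hε : 0 < ε) (x : ℝ) :
    FL s (fun x => u (ε * x)) x = ε ^ (2*s) * FL s u (ε * x) := by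
  unfold FL
  have h := integral_comp_mul_left_Ioi
    (fun y => sd u (ε * x) y * y ^ (-(1 + 2*s))) 0 hε
  rw [mul_zero, smul_eq_mul] at h
  have h2 : ∫ y in Ioi (0:ℝ), sd u (ε * x) y * y ^ (-(1 + 2*s))
      = ε * ∫ y in Ioi (0:ℝ), sd u (ε * x) (ε * y) * (ε * y) ^ (-(1 + 2*s)) := by
    rw [h]; field_simp
  rw [h2, ← integral_const_mul, ← integral_const_mul]
  refine setIntegral_congr_fun measurableSet_Ioi fun y hy => ?_
  have hy0 : (0:ℝ) < y := hy
  rw [Real.mul_rpow hε.le hy0.le]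
  have : ε ^ (2*s) * (ε * ε ^ (-(1 + 2*s))) = 1 := by
    nth_rewrite 2 [← Real.rpow_one ε]
    rw [← Real.rpow_add hε, ← Real.rpow_add hε]
    rw [show 2*s + (1 + -(1 + 2*s)) = 0 by ring, Real.rpow_zero]
  unfold sd
  beta_reduce
  rw [mul_add, mul_sub]
  linear_combination (-(u (ε * x + ε * y) + u (ε * x - ε * y) - 2 * u (ε * x))
    * y ^ (-(1 + 2*s))) * this

/-- At a global minimum point the fractional Laplacian is nonnegative. -/
lemma FL_nonneg_of_min (s : ℝ) {u : ℝ → ℝ} {x : ℝ} (h : ∀ y, u x ≤ u y) : 0 ≤ FL s u x := by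
  refine setIntegral_nonneg measurableSet_Ioi fun y hy => ?_
  refine mul_nonneg ?_ (Real.rpow_pos_of_pos hy _).le
  unfold sd; linarith [h (x + y), h (x - y)]

/-! ### The barrier and the decay estimate -/

/-- The barrier `(1+x²)^{-(1+2s)/2}`. -/
noncomputable def bar (s x : ℝ) : ℝ := (1 + x ^ 2) ^ (-(1/2 + s))

lemma bar_pos (s x : ℝ) : 0 < bar s x := Real.rpow_pos_of_pos (by positivity) _

lemma bar_cmp {s : ℝ} (hs : 0 < s) {c x z : ℝ} (hc : 0 < c) (h : 1 + x ^ 2 ≤ c * (1 + z ^ 2)) :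
    bar s z ≤ c ^ (1/2 + s) * bar s x := by
  unfold bar
  have h1 : (c * (1 + z ^ 2)) ^ (-(1/2 + s)) ≤ (1 + x ^ 2) ^ (-(1/2 + s)) :=
    Real.rpow_le_rpow_of_nonpos (by positivity) h (by linarith)
  rw [Real.mul_rpow hc.le (by positivity), Real.rpow_neg hc.le] at h1
  have h2 : 0 < c ^ (1/2 + s) := Real.rpow_pos_of_pos hc _
  calc (1 + z ^ 2) ^ (-(1/2 + s))
      = c ^ (1/2 + s) * ((c ^ (1/2 + s))⁻¹ * (1 + z ^ 2) ^ (-(1/2 + s))) := by field_simp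
    _ ≤ _ := mul_le_mul_of_nonneg_left h1 h2.le

lemma bar_le_one {s : ℝ} (hs : 0 < s) (x : ℝ) : bar s x ≤ 1 :=
  Real.rpow_le_one_of_one_le_of_nonpos (by nlinarith [sq_nonneg x]) (by linarith)

lemma abs_rpow_eq (s x : ℝ) : |x| ^ (-(1 + 2*s)) = (x ^ 2) ^ (-(1/2 + s)) := by
  rw [← sq_abs, ← Real.rpow_natCast |x| 2, ← Real.rpow_mul (abs_nonneg x)]
  congr 1; push_cast; ring

lemma bar_le_abs {s : ℝ} (hs : 0 < s) {x : ℝ} (hx : x ≠ 0) : bar s x ≤ |x| ^ (-(1 + 2*s)) := by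
  rw [abs_rpow_eq]
  exact Real.rpow_le_rpow_of_nonpos (by positivity) (by linarith) (by linarith)

lemma abs_le_bar {s : ℝ} (hs : 0 < s) {c x y : ℝ} (hc : 0 < c) (hy : y ≠ 0)
    (h : 1 + x ^ 2 ≤ c * y ^ 2) :
    |y| ^ (-(1 + 2*s)) ≤ c ^ (1/2 + s) * bar s x := by
  have hy2 : 0 < y ^ 2 := by positivity
  rw [abs_rpow_eq]
  have h1 : (c * y ^ 2) ^ (-(1/2 + s)) ≤ (1 + x ^ 2) ^ (-(1/2 + s)) :=
    Real.rpow_le_rpow_of_nonpos (by positivity) h (by linarith)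
  rw [Real.mul_rpow hc.le hy2.le, Real.rpow_neg hc.le] at h1
  have h2 : 0 < c ^ (1/2 + s) := Real.rpow_pos_of_pos hc _
  calc (y ^ 2) ^ (-(1/2 + s))
      = c ^ (1/2 + s) * ((c ^ (1/2 + s))⁻¹ * (y ^ 2) ^ (-(1/2 + s))) := by field_simp
    _ ≤ _ := mul_le_mul_of_nonneg_left h1 h2.le

lemma bar_shift {s : ℝ} (hs : 0 < s) {x t : ℝ} (h : |t - x| ≤ 1) :
    bar s t ≤ 3 ^ (1/2 + s) * bar s x := by
  apply bar_cmp hs (by norm_num)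
  obtain ⟨h1, h2⟩ := abs_le.1 h
  nlinarith [sq_nonneg (t + (t - x)), sq_nonneg (t - x)]

lemma hasDerivAt_jap (k x : ℝ) : HasDerivAt (fun x : ℝ => (1 + x ^ 2) ^ k)
    (2 * k * x * (1 + x ^ 2) ^ (k - 1)) x := by
  have h : HasDerivAt (fun x : ℝ => 1 + x ^ 2) (2 * x) x := by
    simpa using (hasDerivAt_pow 2 x).const_add 1
  have := h.rpow_const (p := k) (Or.inl (by positivity))
  convert this using 1; ring

lemma contDiff_jap (k : ℝ) {n : WithTop ℕ∞} : ContDiff ℝ n (fun x : ℝ => (1 + x ^ 2) ^ k) := by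
  apply ContDiff.rpow_const_of_ne
  · fun_prop
  · intro x; positivity

lemma deriv_jap (k : ℝ) : deriv (fun x : ℝ => (1 + x ^ 2) ^ k)
    = fun x => 2 * k * x * (1 + x ^ 2) ^ (k - 1) := by
  funext x; exact (hasDerivAt_jap k x).deriv

lemma jap_succ (k x : ℝ) : (1 + x ^ 2) ^ k = (1 + x ^ 2) ^ (k - 1) * (1 + x ^ 2) := by
  rw [← Real.rpow_add_one (by positivity)]; congr 1; ring

lemma bar_nice {s : ℝ} (hs : 0 < s) : Nice (bar s) :=
  ⟨contDiff_jap _, 1, fun x => by rw [abs_of_pos (bar_pos s x)]; exact bar_le_one hs x⟩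

lemma bar_deriv2 {s : ℝ} (hs : s ∈ Ioo (0:ℝ) 1) (x : ℝ) :
    |deriv (deriv (bar s)) x| ≤ 30 * bar s x := by
  obtain ⟨h0, h1⟩ := hs
  have e : deriv (bar s) = fun x => (2 * (-(1/2 + s)) * x) * (1 + x ^ 2) ^ (-(1/2 + s) - 1) :=
    deriv_jap _
  have e2 : HasDerivAt (fun x : ℝ => (2 * (-(1/2 + s)) * x) * (1 + x ^ 2) ^ (-(1/2 + s) - 1))
      ((2 * (-(1/2 + s))) * (1 + x ^ 2) ^ (-(1/2 + s) - 1) + (2 * (-(1/2 + s)) * x) *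
        (2 * (-(1/2 + s) - 1) * x * (1 + x ^ 2) ^ (-(1/2 + s) - 1 - 1))) x := by
    refine HasDerivAt.mul ?_ (hasDerivAt_jap _ x)
    simpa using (hasDerivAt_id x).const_mul (2 * (-(1/2 + s)))
  rw [e, e2.deriv]
  have hb : bar s x = (1 + x ^ 2) ^ (-(1/2 + s) - 1 - 1) * (1 + x ^ 2) * (1 + x ^ 2) := by
    unfold bar; rw [jap_succ, jap_succ (-(1/2 + s) - 1)]
  rw [hb, jap_succ (-(1/2 + s) - 1)]
  set P := (1 + x ^ 2) ^ (-(1/2 + s) - 1 - 1) with hP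
  have hP0 : 0 < P := Real.rpow_pos_of_pos (by positivity) _
  set X := x ^ 2 with hX
  have hX0 : 0 ≤ X := sq_nonneg x
  have e3 : (2 * (-(1/2 + s))) * (P * (1 + X)) + (2 * (-(1/2 + s)) * x) *
      (2 * (-(1/2 + s) - 1) * x * P) = P * (-(1 + 2*s) * (1 + X) + (1 + 2*s) * (3 + 2*s) * X) := by
    rw [hX]; ring
  rw [e3, abs_mul, abs_of_pos hP0, show 30 * (P * (1 + X) * (1 + X)) =
    P * (30 * ((1 + X) * (1 + X))) by ring]
  refine mul_le_mul_of_nonneg_left ?_ hP0.le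
  have k1 : 0 ≤ (1 + 2*s) * (3 + 2*s) * X := by positivity
  have k2 : (1 + 2*s) * (3 + 2*s) ≤ 15 := by nlinarith
  have k3 : (1 + 2*s) * (3 + 2*s) * X ≤ 15 * X := mul_le_mul_of_nonneg_right k2 hX0
  have k4 : 0 ≤ (1 + 2*s) * (1 + X) := by positivity
  have k5 : (1 + 2*s) * (1 + X) ≤ 3 * (1 + X) := mul_le_mul_of_nonneg_right (by linarith) (by linarith)
  rw [abs_le]; constructor <;> nlinarith

lemma bar_integrable {s : ℝ} (hs : 0 < s) : Integrable (bar s) := by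
  have := integrable_rpow_neg_one_add_norm_sq (E := ℝ) (μ := volume) (r := 1 + 2*s)
    (by simp; linarith)
  refine this.congr (Eventually.of_forall fun x => ?_)
  simp only [bar, Real.norm_eq_abs, sq_abs]
  congr 1; ring

/-- For `y > 1` the product of barrier and kernel is controlled by `bar s x` times an integrable
function: either `z` is comparable to `x`, or the jump from `x` to `z` is. -/
lemma bar_mul_ker {s : ℝ} (hs : 0 < s) {x y z : ℝ} (hy : 1 < y) (hz : |x| ≤ |z| + y) :
    bar s z * y ^ (-(1 + 2*s)) ≤ 5 ^ (1/2 + s) * bar s x * (bar s z + kerMaj s y) := by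
  have hy0 : 0 < y := by linarith
  have hk : kerMaj s y = y ^ (-(1 + 2*s)) := by
    unfold kerMaj; rw [min_eq_left (by nlinarith), one_mul]
  have hyp : 0 < y ^ (-(1 + 2*s)) := Real.rpow_pos_of_pos hy0 _
  have hbx := bar_pos s x
  have hbz := bar_pos s z
  have h5 : 0 < (5:ℝ) ^ (1/2 + s) := by positivity
  rw [hk, mul_add]
  rcases le_total (|x|/2) |z| with h | h
  · have : bar s z ≤ 5 ^ (1/2 + s) * bar s x := by
      apply bar_cmp hs (by norm_num)
      have : (|x|/2) ^ 2 ≤ |z| ^ 2 := pow_le_pow_left₀ (by positivity) h 2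
      rw [sq_abs, div_pow, sq_abs] at this
      nlinarith [sq_nonneg z]
    have h2 := mul_le_mul_of_nonneg_right this hyp.le
    have h3 : 0 ≤ 5 ^ (1/2 + s) * bar s x * bar s z := by positivity
    linarith
  · have : |y| ^ (-(1 + 2*s)) ≤ 5 ^ (1/2 + s) * bar s x := by
      apply abs_le_bar hs (by norm_num) hy0.ne'
      have : (|x|/2) ^ 2 ≤ y ^ 2 := pow_le_pow_left₀ (by positivity) (by linarith) 2
      rw [div_pow, sq_abs] at this
      nlinarith
    rw [abs_of_pos hy0] at this
    have h2 := mul_le_mul_of_nonneg_left this hbz.le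
    have h3 : 0 ≤ 5 ^ (1/2 + s) * bar s x * y ^ (-(1 + 2*s)) := by positivity
    linarith

/-- The barrier is a supersolution up to a constant: near differences `y ≤ 1` are controlled by its
second derivative, and for `y > 1` either the kernel or the translated barrier is of size `bar s x`. -/
lemma FL_bar_le {s : ℝ} (hs : s ∈ Ioo (0:ℝ) 1) : ∃ C0, 0 < C0 ∧ ∀ x, FL s (bar s) x ≤ C0 * bar s x := by
  have h0 := hs.1
  set A : ℝ := 60 * 3 ^ (1/2 + s) + 2 * 5 ^ (1/2 + s) with hA
  have hA0 : 0 < A := by positivity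
  set Ik := ∫ y in Ioi (0:ℝ), kerMaj s y with hIk
  set Ib := ∫ y, bar s y with hIb
  have hIk0 : 0 ≤ Ik := setIntegral_nonneg measurableSet_Ioi fun y hy => kerMaj_nonneg s hy
  have hIb0 : 0 ≤ Ib := integral_nonneg fun y => (bar_pos s y).le
  refine ⟨A * (Ik + 2 * Ib) + 1, by positivity, fun x => ?_⟩
  have hbx := bar_pos s x
  have hint : IntegrableOn (fun y => A * bar s x * (kerMaj s y + (bar s (x + y) + bar s (x - y))))
      (Ioi 0) := by
    refine Integrable.const_mul ((kerMaj_integrable hs).add (Integrable.add ?_ ?_)) _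
    · exact ((bar_integrable h0).comp_add_left x).integrableOn
    · exact ((bar_integrable h0).comp_sub_left x).integrableOn
  have hle : FL s (bar s) x ≤
      ∫ y in Ioi (0:ℝ), A * bar s x * (kerMaj s y + (bar s (x + y) + bar s (x - y))) := by
    refine setIntegral_mono_on (FL_integrable hs (bar_nice h0) x) hint measurableSet_Ioi ?_
    intro y hy
    have hy0 : (0:ℝ) < y := hy
    have hyp : 0 < y ^ (-(1 + 2*s)) := Real.rpow_pos_of_pos hy0 _
    have hp := bar_pos s (x + y)
    have hm := bar_pos s (x - y)
    have hk := kerMaj_nonneg s hy0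
    have h3 : 0 < (3:ℝ) ^ (1/2 + s) := by positivity
    have h5 : 0 < (5:ℝ) ^ (1/2 + s) := by positivity
    rcases le_or_gt y 1 with h | h
    · have hsd : |sd (bar s) x y| ≤ 2 * (30 * (3 ^ (1/2 + s) * bar s x)) * y ^ 2 := by
        refine sd_le (bar_nice h0).1 hy0.le fun t ht => (bar_deriv2 hs t).trans ?_
        refine mul_le_mul_of_nonneg_left (bar_shift h0 ?_) (by norm_num)
        rw [abs_le]; constructor <;> linarith [ht.1, ht.2]
      have e : kerMaj s y = y ^ 2 * y ^ (-(1 + 2*s)) := by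
        unfold kerMaj; rw [min_eq_right (by nlinarith)]
      calc sd (bar s) x y * y ^ (-(1 + 2*s))
          ≤ (2 * (30 * (3 ^ (1/2 + s) * bar s x)) * y ^ 2) * y ^ (-(1 + 2*s)) :=
            mul_le_mul_of_nonneg_right ((le_abs_self _).trans hsd) hyp.le
        _ = (60 * 3 ^ (1/2 + s)) * bar s x * kerMaj s y := by rw [e]; ring
        _ ≤ A * bar s x * kerMaj s y := by
            refine mul_le_mul_of_nonneg_right (mul_le_mul_of_nonneg_right ?_ hbx.le) hk
            rw [hA]; linarith
        _ ≤ _ := mul_le_mul_of_nonneg_left (by linarith) (by positivity)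
    · have i1 := bar_mul_ker h0 (x := x) (z := x + y) h (by
        have := abs_sub_abs_le_abs_sub x (x + y)
        rw [show x - (x + y) = -y by ring, abs_neg, abs_of_pos hy0] at this; linarith)
      have i2 := bar_mul_ker h0 (x := x) (z := x - y) h (by
        have := abs_sub_abs_le_abs_sub x (x - y)
        rw [show x - (x - y) = y by ring, abs_of_pos hy0] at this; linarith)
      have i3 : sd (bar s) x y * y ^ (-(1 + 2*s)) ≤
          bar s (x + y) * y ^ (-(1 + 2*s)) + bar s (x - y) * y ^ (-(1 + 2*s)) := by
        unfold sd; nlinarith [mul_pos hbx hyp]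
      have i4 : 2 * 5 ^ (1/2 + s) * bar s x * (kerMaj s y + (bar s (x + y) + bar s (x - y)))
          ≤ A * bar s x * (kerMaj s y + (bar s (x + y) + bar s (x - y))) := by
        refine mul_le_mul_of_nonneg_right (mul_le_mul_of_nonneg_right ?_ hbx.le) (by linarith)
        rw [hA]; linarith
      have i5 : 0 ≤ 5 ^ (1/2 + s) * bar s x * (bar s (x + y) + bar s (x - y)) := by positivity
      linarith
  refine hle.trans ?_
  have hsum : IntegrableOn (fun y => bar s (x + y) + bar s (x - y)) (Ioi 0) := Integrable.add
    ((bar_integrable h0).comp_add_left x).integrableOn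
    ((bar_integrable h0).comp_sub_left x).integrableOn
  rw [integral_const_mul, integral_add (kerMaj_integrable hs) hsum,
    integral_add ((bar_integrable h0).comp_add_left x).integrableOn
    ((bar_integrable h0).comp_sub_left x).integrableOn]
  have j1 : ∫ y in Ioi (0:ℝ), bar s (x + y) ≤ Ib := by
    rw [hIb, ← integral_add_left_eq_self (bar s) x]
    exact setIntegral_le_integral ((bar_integrable h0).comp_add_left x)
      (Eventually.of_forall fun y => (bar_pos s _).le)
  have j2 : ∫ y in Ioi (0:ℝ), bar s (x - y) ≤ Ib := by
    rw [hIb, ← integral_sub_left_eq_self (bar s) volume x]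
    exact setIntegral_le_integral ((bar_integrable h0).comp_sub_left x)
      (Eventually.of_forall fun y => (bar_pos s _).le)
  calc A * bar s x * (Ik + ((∫ y in Ioi (0:ℝ), bar s (x + y)) + ∫ y in Ioi (0:ℝ), bar s (x - y)))
      ≤ A * bar s x * (Ik + 2 * Ib) := mul_le_mul_of_nonneg_left (by linarith) (by positivity)
    _ ≤ _ := by nlinarith

lemma bar_tendsto {s : ℝ} (hs : 0 < s) : Tendsto (bar s) (cocompact ℝ) (nhds 0) := by
  have h1 : Tendsto (fun x : ℝ => 1 + x ^ 2) (cocompact ℝ) atTop := by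
    refine tendsto_atTop_add_const_left _ _ ?_
    have := (tendsto_pow_atTop (α := ℝ) two_ne_zero).comp (tendsto_norm_cocompact_atTop (E := ℝ))
    refine this.congr fun x => ?_
    simp
  exact (tendsto_rpow_neg_atTop (by linarith : 0 < 1/2 + s)).comp h1

/-- One-sided decay: a function vanishing at infinity which is a subsolution, outside a compact
set, of a linear equation with zeroth-order coefficient bounded below, decays like the barrier.
The constant depends only on the data. The comparison function is a dilation `bar s (ε x)`, whose
fractional Laplacian carries the small factor `ε^{2s}`. -/
lemma decay_upper {s : ℝ} (hs : s ∈ Ioo (0:ℝ) 1) {a0 : ℝ} (ha0 : 0 < a0) (R M G : ℝ) :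
    ∃ K, 0 < K ∧ ∀ v : ℝ → ℝ, Nice v → Tendsto v (cocompact ℝ) (nhds 0) →
      (∀ x, |x| ≤ R → v x ≤ M) →
      (∀ x, R < |x| → ∃ a, a0 ≤ a ∧ a * v x - G * bar s x ≤ C1s s * FL s v x) →
      ∀ x, v x ≤ K * bar s x := by
  have h0 := hs.1
  have hC := C1s_pos hs
  obtain ⟨C0, hC0, hbar⟩ := FL_bar_le hs
  obtain ⟨ε, hε, hε1, hεC⟩ : ∃ ε : ℝ, 0 < ε ∧ ε ≤ 1 ∧ C1s s * (ε ^ (2*s) * C0) ≤ a0 / 2 := by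
    have ht : Tendsto (fun ε : ℝ => C1s s * (ε ^ (2*s) * C0)) (nhdsWithin 0 (Ioi 0)) (nhds 0) := by
      have : ContinuousAt (fun ε : ℝ => C1s s * (ε ^ (2*s) * C0)) 0 :=
        continuousAt_const.mul ((Real.continuousAt_rpow_const 0 _ (Or.inr (by linarith))).mul
          continuousAt_const)
      have h2 := this.tendsto.mono_left (nhdsWithin_le_nhds (s := Ioi 0))
      simpa [Real.zero_rpow (by linarith : 2*s ≠ 0)] using h2
    have h1 := ht.eventually (ge_mem_nhds (half_pos ha0))
    have h2 : ∀ᶠ ε : ℝ in nhdsWithin 0 (Ioi 0), ε ≤ 1 :=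
      (ge_mem_nhds one_pos : ∀ᶠ ε : ℝ in nhds 0, ε ≤ 1).filter_mono nhdsWithin_le_nhds
    obtain ⟨ε, h3, h4, h5⟩ := (h1.and (h2.and self_mem_nhdsWithin)).exists
    exact ⟨ε, h5, h4, h3⟩
  have hbe : ∀ x, bar s x ≤ bar s (ε * x) := fun x => by
    have := bar_cmp h0 (c := 1) (x := ε * x) (z := x) one_pos (by
      rw [mul_pow]; nlinarith [sq_nonneg x, mul_le_mul_of_nonneg_right
        (pow_le_one₀ (n := 2) hε.le hε1) (sq_nonneg x)])
    simpa using this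
  have hbe2 : ∀ x, bar s (ε * x) ≤ (ε⁻¹ ^ 2) ^ (1/2 + s) * bar s x := fun x => by
    refine bar_cmp h0 (by positivity) ?_
    have : 1 ≤ ε⁻¹ ^ 2 := one_le_pow₀ ((one_le_inv₀ hε).2 hε1)
    have e : ε⁻¹ ^ 2 * (1 + (ε * x) ^ 2) = ε⁻¹ ^ 2 + x ^ 2 := by field_simp
    rw [e]; linarith
  set K : ℝ := max (|M| / bar s R) (2 * |G| / a0) + 1 with hK
  have hbR := bar_pos s R
  have hK0 : 0 < K := by
    have : 0 ≤ |M| / bar s R := by positivity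
    rw [hK]; linarith [le_max_left (|M| / bar s R) (2 * |G| / a0)]
  refine ⟨K * (ε⁻¹ ^ 2) ^ (1/2 + s), by positivity, ?_⟩
  intro v hv hv0 hin hout x
  have main : v x ≤ K * bar s (ε * x) := by
    by_contra hcon
    push Not at hcon
    have hbn : Nice (fun x => bar s (ε * x)) := by
      simpa using (bar_nice h0).comp_affine ε 0
    set w : ℝ → ℝ := fun x => K * bar s (ε * x) + (-1) * v x with hw
    have hwx : w x < 0 := by simp only [hw]; linarith
    have hwc : Continuous w := (hbn.lin hv K (-1)).1.continuous
    have hwt : Tendsto w (cocompact ℝ) (nhds 0) := by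
      have h1 : Tendsto (fun x => bar s (ε * x)) (cocompact ℝ) (nhds 0) := by
        refine squeeze_zero (fun x => (bar_pos s _).le) hbe2 ?_
        simpa only [mul_zero] using (bar_tendsto h0).const_mul ((ε⁻¹ ^ 2) ^ (1/2 + s))
      simpa only [mul_zero, add_zero] using (h1.const_mul K).add (hv0.const_mul (-1))
    obtain ⟨z, hz⟩ := hwc.exists_forall_le' x (hwt.eventually (le_mem_nhds hwx))
    have hwz : w z < 0 := (hz x).trans_lt hwx
    have hvz : K * bar s (ε * z) < v z := by simp only [hw] at hwz; linarith
    have hzR : R < |z| := by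
      by_contra hle
      push Not at hle
      have h1 := hin z hle
      have h2 : bar s R ≤ bar s (ε * z) := by
        refine le_trans ?_ (hbe z)
        have := bar_cmp h0 (c := 1) (x := z) (z := R) one_pos (by
          have : |z| ^ 2 ≤ R ^ 2 := pow_le_pow_left₀ (abs_nonneg z) hle 2
          rw [sq_abs] at this; linarith)
        simpa using this
      have h3 : |M| ≤ K * bar s R := by
        rw [← div_le_iff₀ hbR, hK]; linarith [le_max_left (|M| / bar s R) (2 * |G| / a0)]
      have h4 := mul_le_mul_of_nonneg_left h2 hK0.le
      linarith [le_abs_self M]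
    obtain ⟨a, ha, hav⟩ := hout z hzR
    have hmin := FL_nonneg_of_min s hz
    have hlin : FL s w z = K * FL s (fun x => bar s (ε * x)) z + (-1) * FL s v z :=
      FL_lin hs hbn hv K (-1) z
    rw [FL_scale s (bar s) hε] at hlin
    have hbz := bar_pos s (ε * z)
    have k1 : C1s s * (ε ^ (2*s) * FL s (bar s) (ε * z)) ≤ a0 / 2 * bar s (ε * z) := by
      have := mul_le_mul_of_nonneg_left (hbar (ε * z))
        (by positivity : 0 ≤ C1s s * ε ^ (2*s))
      have := mul_le_mul_of_nonneg_right hεC hbz.le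
      linarith
    have k2 := mul_le_mul_of_nonneg_left k1 hK0.le
    have k3 : 0 ≤ C1s s * FL s w z := by positivity
    have k4 : a0 * (K * bar s (ε * z)) < a * v z := by
      have : 0 < v z := lt_trans (by positivity) hvz
      nlinarith
    have k5 : |G| ≤ K * (a0 / 2) := by
      have : 2 * |G| / a0 ≤ K := by rw [hK]; linarith [le_max_right (|M| / bar s R) (2 * |G| / a0)]
      rw [div_le_iff₀ ha0] at this; linarith
    have k6 : G * bar s z ≤ K * (a0 / 2) * bar s (ε * z) :=
      (mul_le_mul_of_nonneg_right (le_abs_self G) (bar_pos s z).le).trans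
        ((mul_le_mul_of_nonneg_left (hbe z) (abs_nonneg G)).trans
          (mul_le_mul_of_nonneg_right k5 hbz.le))
    rw [hlin] at k3
    nlinarith
  refine main.trans ?_
  rw [mul_assoc]
  exact mul_le_mul_of_nonneg_left (hbe2 x) hK0.le

/-- Two-sided form of `decay_upper`. The constant is uniform over all `v` with the given data, which
is what allows passing to the limit in difference quotients. -/
lemma decay {s : ℝ} (hs : s ∈ Ioo (0:ℝ) 1) {a0 : ℝ} (ha0 : 0 < a0) (R M G : ℝ) :
    ∃ K, 0 < K ∧ ∀ v : ℝ → ℝ, Nice v → Tendsto v (cocompact ℝ) (nhds 0) →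
      (∀ x, |x| ≤ R → |v x| ≤ M) →
      (∀ x, R < |x| → ∃ a, a0 ≤ a ∧ |C1s s * FL s v x - a * v x| ≤ G * bar s x) →
      ∀ x, |v x| ≤ K * bar s x := by
  obtain ⟨K, hK, h⟩ := decay_upper hs ha0 R M G
  refine ⟨K, hK, fun v hv hv0 hin hout x => ?_⟩
  rw [abs_le']
  constructor
  · refine h v hv hv0 (fun x hx => (abs_le.1 (hin x hx)).2) (fun x hx => ?_) x
    obtain ⟨a, ha, h1⟩ := hout x hx
    exact ⟨a, ha, by linarith [(abs_le.1 h1).1]⟩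
  · have hn : Nice (fun x => -v x) := by
      have := hv.lin hv (-1) 0
      simpa using this
    refine h (fun x => -v x) hn (by simpa using hv0.neg)
      (fun x hx => by linarith [(abs_le.1 (hin x hx)).1]) (fun x hx => ?_) x
    obtain ⟨a, ha, h1⟩ := hout x hx
    refine ⟨a, ha, ?_⟩
    have e : FL s (fun x => -v x) x = - FL s v x := by
      have := FL_lin hs hv hv (-1) 0 x
      simpa using this
    rw [e]
    linarith [(abs_le.1 h1).2]

/-! ### Decay of derivatives of the layer and of the corrector -/

lemma increment_le {s : ℝ} (hs : 0 < s) {f f' : ℝ → ℝ} {G : ℝ} (hf : ∀ x, HasDerivAt f (f' x) x)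
    (hG : ∀ x, |f' x| ≤ G * bar s x) {h x : ℝ} (h0 : 0 < h) (h1 : h ≤ 1) :
    |f (x + h) - f x| ≤ h * (G * 3 ^ (1/2 + s) * bar s x) := by
  have hG0 : 0 ≤ G := by
    have := (abs_nonneg _).trans (hG 0)
    exact nonneg_of_mul_nonneg_left this (bar_pos s 0)
  have := (convex_Icc x (x + h)).norm_image_sub_le_of_norm_hasDerivWithin_le
    (C := G * 3 ^ (1/2 + s) * bar s x) (x := x) (y := x + h)
    (fun t _ => (hf t).hasDerivWithinAt) (fun t ht => ?_) ⟨le_rfl, by linarith⟩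
    ⟨by linarith, le_rfl⟩
  · simp only [Real.norm_eq_abs, add_sub_cancel_left, abs_of_pos h0] at this
    linarith
  · refine (hG t).trans ?_
    rw [mul_assoc]
    refine mul_le_mul_of_nonneg_left (bar_shift hs ?_) hG0
    rw [abs_le]; constructor <;> linarith [ht.1, ht.2]

lemma tendsto_of_le_bar {s : ℝ} (hs : 0 < s) {v : ℝ → ℝ} {K : ℝ} (h : ∀ x, |v x| ≤ K * bar s x) :
    Tendsto v (cocompact ℝ) (nhds 0) := by
  refine squeeze_zero_norm h ?_
  simpa only [mul_zero] using (bar_tendsto hs).const_mul K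

/-- Difference quotients of `u` satisfy, uniformly in the step, a linear equation to which the
decay estimate applies; near the origin they are controlled by local smoothness alone. -/
lemma deriv_decay {s : ℝ} (hs : s ∈ Ioo (0:ℝ) 1) {a0 : ℝ} (ha0 : 0 < a0) {u : ℝ → ℝ} (hu : Nice u)
    {l₁ l₂ : ℝ} (hbot : Tendsto u atBot (nhds l₁)) (htop : Tendsto u atTop (nhds l₂)) (R G : ℝ)
    (heq : ∀ h, 0 < h → h ≤ 1 → ∀ x, R < |x| → ∃ a, a0 ≤ a ∧
      |C1s s * (FL s u (x + h) - FL s u x) - a * (u (x + h) - u x)| ≤ h * (G * bar s x)) :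
    ∃ K, 0 < K ∧ ∀ x, |deriv u x| ≤ K * bar s x := by
  have hd : Differentiable ℝ u := hu.1.differentiable (by norm_num)
  have hdc : Continuous (deriv u) := hu.1.continuous_deriv (by norm_num)
  obtain ⟨M, hM⟩ := isCompact_Icc.exists_bound_of_continuousOn
    (s := Icc (-(R + 1)) (R + 1)) hdc.continuousOn
  obtain ⟨K, hK, hdec⟩ := decay hs ha0 R M G
  refine ⟨K, hK, fun x => ?_⟩
  have key : ∀ h, 0 < h → h ≤ 1 → |h⁻¹ * (u (x + h) - u x)| ≤ K * bar s x := by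
    intro h h0 h1
    have hsh : Nice (fun x => u (x + h)) := by simpa using hu.comp_affine 1 h
    have e : (fun x => h⁻¹ * (u (x + h) - u x))
        = fun x => h⁻¹ * u (x + h) + (-h⁻¹) * u x := by funext x; ring
    refine hdec (fun x => h⁻¹ * (u (x + h) - u x)) ?_ ?_ ?_ ?_ x
    · rw [e]; exact hsh.lin hu _ _
    · rw [cocompact_eq_atBot_atTop, tendsto_sup]
      constructor
      · have := ((hbot.comp (tendsto_atBot_add_const_right _ h tendsto_id)).sub hbot).const_mul h⁻¹
        simpa using this
      · have := ((htop.comp (tendsto_atTop_add_const_right _ h tendsto_id)).sub htop).const_mul h⁻¹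
        simpa using this
    · intro x hx
      obtain ⟨hx1, hx2⟩ := abs_le.1 hx
      have := (convex_Icc x (x + h)).norm_image_sub_le_of_norm_deriv_le
        (C := M) (x := x) (y := x + h) (f := u)
        (fun t _ => hd t) (fun t ht => hM t ⟨by linarith [ht.1], by linarith [ht.2]⟩)
        ⟨le_rfl, by linarith⟩ ⟨by linarith, le_rfl⟩
      simp only [Real.norm_eq_abs, add_sub_cancel_left, abs_of_pos h0] at this
      rw [abs_mul, abs_of_pos (inv_pos.2 h0), inv_mul_le_iff₀ h0]
      linarith
    · intro x hx
      obtain ⟨a, ha, hle⟩ := heq h h0 h1 x hx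
      refine ⟨a, ha, ?_⟩
      have e2 : C1s s * FL s (fun x => h⁻¹ * (u (x + h) - u x)) x - a * (h⁻¹ * (u (x + h) - u x))
          = h⁻¹ * (C1s s * (FL s u (x + h) - FL s u x) - a * (u (x + h) - u x)) := by
        rw [e, FL_lin hs hsh hu, FL_shift]; ring
      rw [e2, abs_mul, abs_of_pos (inv_pos.2 h0), inv_mul_le_iff₀ h0]
      exact hle
  have ht := ((hd x).hasDerivAt.tendsto_slope_zero_right).abs
  refine le_of_tendsto ht ?_
  have : ∀ᶠ h : ℝ in nhdsWithin 0 (Ioi 0), h ≤ 1 :=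
    (ge_mem_nhds one_pos : ∀ᶠ ε : ℝ in nhds 0, ε ≤ 1).filter_mono nhdsWithin_le_nhds
  filter_upwards [this, self_mem_nhdsWithin] with h h1 h0
  exact key h h0 h1

/-- `deriv_decay` for a linear equation whose coefficient and source have derivatives `O(bar)`. -/
lemma lin_deriv_decay {s : ℝ} (hs : s ∈ Ioo (0:ℝ) 1) {a0 : ℝ} (ha0 : 0 < a0) {u : ℝ → ℝ}
    (hu : Nice u) (h0 : Tendsto u (cocompact ℝ) (nhds 0)) {A A' f f' : ℝ → ℝ} {R G₁ G₂ : ℝ}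
    (heq : ∀ x, C1s s * FL s u x = A x * u x + f x)
    (hA : ∀ x, HasDerivAt A (A' x) x) (hA' : ∀ x, |A' x| ≤ G₁ * bar s x)
    (hf : ∀ x, HasDerivAt f (f' x) x) (hf' : ∀ x, |f' x| ≤ G₂ * bar s x)
    (hAR : ∀ x, R ≤ |x| → a0 ≤ A x) :
    ∃ K, 0 < K ∧ ∀ x, |deriv u x| ≤ K * bar s x := by
  obtain ⟨M, hM⟩ := hu.2
  rw [cocompact_eq_atBot_atTop, tendsto_sup] at h0
  refine deriv_decay hs ha0 hu h0.1 h0.2 (R + 1)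
    (G₁ * 3 ^ (1/2 + s) * M + G₂ * 3 ^ (1/2 + s)) ?_
  intro h hh0 hh1 x hx
  refine ⟨A (x + h), hAR _ ?_, ?_⟩
  · have := abs_sub_abs_le_abs_sub x (x + h)
    rw [show x - (x + h) = -h by ring, abs_neg, abs_of_pos hh0] at this; linarith
  · have e : C1s s * (FL s u (x + h) - FL s u x) - A (x + h) * (u (x + h) - u x)
        = (A (x + h) - A x) * u x + (f (x + h) - f x) := by
      rw [mul_sub, heq, heq]; ring
    rw [e]
    refine (abs_add_le _ _).trans ?_
    rw [abs_mul]
    have k1 := increment_le hs.1 hA hA' (x := x) hh0 hh1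
    have k2 := increment_le hs.1 hf hf' (x := x) hh0 hh1
    have k3 := mul_le_mul k1 (hM x) (abs_nonneg _) ((abs_nonneg _).trans k1)
    linarith

/-- Differentiating an equation for `FL s u` gives the equation for `deriv u`. -/
lemma FL_deriv_eq {s : ℝ} (hs : s ∈ Ioo (0:ℝ) 1) {u F : ℝ → ℝ} (hu : Nice u)
    (hu' : Nice (deriv u)) (heq : ∀ x, C1s s * FL s u x = F x) {F' x : ℝ}
    (hF : HasDerivAt F F' x) : C1s s * FL s (deriv u) x = F' := by
  have h1 := (FL_hasDerivAt hs hu hu' x).const_mul (C1s s)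
  have h2 : (fun x => C1s s * FL s u x) = F := funext heq
  rw [h2] at h1
  exact h1.unique hF

/-- Quantitative facts about the potential and the layer solution: smoothness of the layer,
decay of its derivatives, bounds on the derivatives of `W` along it, and convexity of `W` at the
values taken by the layer far away. -/
structure LayerData (s : ℝ) (W φ : ℝ → ℝ) (K R : ℝ) : Prop where
  Kpos : 0 < K
  mem : ∀ x, φ x ∈ Icc (0:ℝ) 1
  nice : Nice φ
  nice1 : Nice (deriv φ)
  nice2 : Nice (deriv (deriv φ))
  d1 : ∀ x, |deriv φ x| ≤ K * bar s x
  d2 : ∀ x, |deriv (deriv φ) x| ≤ K * bar s x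
  d3 : ∀ x, |deriv (deriv (deriv φ)) x| ≤ K * bar s x
  w2 : ∀ x, |deriv (deriv W) (φ x)| ≤ K
  w3 : ∀ x, |deriv (deriv (deriv W)) (φ x)| ≤ K
  w4 : ∀ x, |deriv (deriv (deriv (deriv W))) (φ x)| ≤ K
  conv : ∀ x, R ≤ |x| → deriv (deriv W) 0 / 2 ≤ deriv (deriv W) (φ x)

lemma deriv_periodic {f : ℝ → ℝ} (h : ∀ v, f (v + 1) = f v) (v : ℝ) :
    deriv f (v + 1) = deriv f v := by
  rw [← deriv_comp_add_const f 1 v]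
  congr 1; funext v; exact h v

lemma deriv_contDiff {f : ℝ → ℝ} {n : ℕ} (h : ContDiff ℝ ((n + 1 : ℕ) : WithTop ℕ∞) f) :
    ContDiff ℝ (n : WithTop ℕ∞) (deriv f) := by
  have : ContDiff ℝ ((n : WithTop ℕ∞) + 1) f := by exact_mod_cast h
  exact (contDiff_succ_iff_deriv.1 this).2.2

/-- `LayerData` holds for the layer solution: the equation and its differentiated forms give in turn
the decay of the first, second and third derivatives of `φ`. -/
lemma layerData_exists {s : ℝ} (hs : s ∈ Ioo (0:ℝ) 1) {W φ : ℝ → ℝ} (hW : WAssump s W)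
    (hφ : IsLayerSolution s W φ) : ∃ K R, LayerData s W φ K R := by
  obtain ⟨⟨β, -, hWc, -⟩, hper, -, -, hα, -⟩ := hW
  obtain ⟨hφc, hφeq, hφpos, hbot, htop, -⟩ := hφ
  have h0 := hs.1
  rw [iteratedDeriv_succ, iteratedDeriv_one] at hα
  have cW1 : ContDiff ℝ (3:ℕ) (deriv W) := deriv_contDiff (by exact_mod_cast hWc)
  have cW2 : ContDiff ℝ (2:ℕ) (deriv (deriv W)) := deriv_contDiff cW1
  have cW3 : ContDiff ℝ (1:ℕ) (deriv (deriv (deriv W))) := deriv_contDiff cW2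
  have cW4 : Continuous (deriv (deriv (deriv (deriv W)))) :=
    (deriv_contDiff (n := 0) cW3).continuous
  have cφ1 : ContDiff ℝ (3:ℕ) (deriv φ) := deriv_contDiff (by exact_mod_cast hφc)
  have cφ2 : ContDiff ℝ (2:ℕ) (deriv (deriv φ)) := deriv_contDiff cφ1
  have cφ0' : ContDiff ℝ 2 φ := hφc.of_le (by norm_num)
  have cφ1' : ContDiff ℝ 2 (deriv φ) := cφ1.of_le (by norm_num)
  have cφ2' : ContDiff ℝ 2 (deriv (deriv φ)) := by exact_mod_cast cφ2
  have hmono : StrictMono φ := strictMono_of_deriv_pos hφpos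
  have hmem : ∀ x, φ x ∈ Icc (0:ℝ) 1 := fun x =>
    ⟨hmono.monotone.le_of_tendsto hbot x, hmono.monotone.ge_of_tendsto htop x⟩
  have hn0 : Nice φ := ⟨cφ0', 1, fun x => abs_le.2 ⟨by linarith [(hmem x).1], (hmem x).2⟩⟩
  have dφ0 : ∀ x, HasDerivAt φ (deriv φ x) x := fun x =>
    (cφ0'.differentiable (by norm_num) x).hasDerivAt
  have dφ1 : ∀ x, HasDerivAt (deriv φ) (deriv (deriv φ) x) x := fun x =>
    (cφ1'.differentiable (by norm_num) x).hasDerivAt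
  have dW1 : ∀ x, HasDerivAt (deriv W) (deriv (deriv W) x) x := fun x =>
    (cW1.differentiable (by norm_num) x).hasDerivAt
  have dW2 : ∀ x, HasDerivAt (deriv (deriv W)) (deriv (deriv (deriv W)) x) x := fun x =>
    (cW2.differentiable (by norm_num) x).hasDerivAt
  have dW3 : ∀ x, HasDerivAt (deriv (deriv (deriv W))) (deriv (deriv (deriv (deriv W))) x) x :=
    fun x => (cW3.differentiable (by norm_num) x).hasDerivAt
  have dA : ∀ x, HasDerivAt (fun x => deriv (deriv W) (φ x))
      (deriv (deriv (deriv W)) (φ x) * deriv φ x) x := fun x => (dW2 _).comp x (dφ0 x)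
  obtain ⟨B2, hB2⟩ := isCompact_Icc.exists_bound_of_continuousOn
    (s := Icc (0:ℝ) 1) cW2.continuous.continuousOn
  obtain ⟨B3, hB3⟩ := isCompact_Icc.exists_bound_of_continuousOn
    (s := Icc (0:ℝ) 1) cW3.continuous.continuousOn
  obtain ⟨B4, hB4⟩ := isCompact_Icc.exists_bound_of_continuousOn
    (s := Icc (0:ℝ) 1) cW4.continuousOn
  simp only [Real.norm_eq_abs] at hB2 hB3 hB4
  have hB20 : 0 ≤ B2 := (abs_nonneg _).trans (hB2 0 (by simp))
  have hB30 : 0 ≤ B3 := (abs_nonneg _).trans (hB3 0 (by simp))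
  have hB40 : 0 ≤ B4 := (abs_nonneg _).trans (hB4 0 (by simp))
  obtain ⟨R, hR⟩ : ∃ R, ∀ x, R ≤ |x| → deriv (deriv W) 0 / 2 ≤ deriv (deriv W) (φ x) := by
    have hW21 : deriv (deriv W) 1 = deriv (deriv W) 0 := by
      have := deriv_periodic (deriv_periodic hper) 0
      simpa using this
    have t1 : Tendsto (fun x => deriv (deriv W) (φ x)) atTop (nhds (deriv (deriv W) 0)) := by
      rw [← hW21]; exact (cW2.continuous.tendsto 1).comp htop
    have t2 : Tendsto (fun x => deriv (deriv W) (φ x)) atBot (nhds (deriv (deriv W) 0)) :=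
      (cW2.continuous.tendsto 0).comp hbot
    obtain ⟨R1, h1⟩ := eventually_atTop.1 (t1.eventually (le_mem_nhds (half_lt_self hα)))
    obtain ⟨R2, h2⟩ := eventually_atBot.1 (t2.eventually (le_mem_nhds (half_lt_self hα)))
    refine ⟨max R1 (-R2), fun x hx => ?_⟩
    rcases le_abs.1 hx with h | h
    · exact h1 x ((le_max_left _ _).trans h)
    · exact h2 x (by linarith [(le_max_right R1 (-R2)).trans h])
  have E0 : ∀ x, C1s s * FL s φ x = deriv W (φ x) := fun x => by
    rw [← fracLap_eq hs hn0, hφeq]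
  obtain ⟨K1, hK1, b1⟩ : ∃ K, 0 < K ∧ ∀ x, |deriv φ x| ≤ K * bar s x := by
    refine deriv_decay hs (half_pos hα) hn0 hbot htop (R + 1) 0 fun h hh0 hh1 x hx => ?_
    -- Cauchy's mean value theorem yields the coefficient `W''(φ t)` with `t` between `x` and `x+h`.
    obtain ⟨t, ht, hte⟩ := exists_ratio_hasDerivAt_eq_ratio_slope
      (fun x => deriv W (φ x)) (fun x => deriv (deriv W) (φ x) * deriv φ x)
      (show x < x + h by linarith)
      (cW1.continuous.comp hφc.continuous).continuousOn
      (fun t _ => (dW1 _).comp t (dφ0 t)) φ (deriv φ) hφc.continuous.continuousOn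
      (fun t _ => dφ0 t)
    refine ⟨deriv (deriv W) (φ t), hR t ?_, ?_⟩
    · have := abs_sub_abs_le_abs_sub x t
      have h3 : |x - t| ≤ 1 := by rw [abs_le]; constructor <;> linarith [ht.1, ht.2]
      linarith
    · have hp := (hφpos t).ne'
      have : deriv W (φ (x + h)) - deriv W (φ x)
          = deriv (deriv W) (φ t) * (φ (x + h) - φ x) := by
        apply mul_right_cancel₀ hp
        rw [← hte]; ring
      rw [mul_sub, E0, E0, this]; simp
  have bar1 := bar_le_one h0
  have hn1 : Nice (deriv φ) := ⟨cφ1', K1, fun x => (b1 x).trans (by nlinarith [bar1 x])⟩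
  have E1 : ∀ x, C1s s * FL s (deriv φ) x = deriv (deriv W) (φ x) * deriv φ x := fun x =>
    FL_deriv_eq hs hn0 hn1 E0 ((dW1 _).comp x (dφ0 x))
  have bA : ∀ x, |deriv (deriv (deriv W)) (φ x) * deriv φ x| ≤ (B3 * K1) * bar s x := fun x => by
    rw [abs_mul, mul_assoc]
    exact mul_le_mul (hB3 _ (hmem x)) (b1 x) (abs_nonneg _) hB30
  obtain ⟨K2, hK2, b2⟩ : ∃ K, 0 < K ∧ ∀ x, |deriv (deriv φ) x| ≤ K * bar s x :=
    lin_deriv_decay hs (half_pos hα) hn1 (tendsto_of_le_bar h0 b1)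
      (f := fun _ => 0) (f' := fun _ => 0) (G₂ := 0)
      (fun x => by rw [E1, add_zero]) dA bA (fun x => hasDerivAt_const x 0) (fun x => by simp) hR
  have hn2 : Nice (deriv (deriv φ)) := ⟨cφ2', K2, fun x => (b2 x).trans (by nlinarith [bar1 x])⟩
  have dA1 : ∀ x, HasDerivAt (fun x => deriv (deriv (deriv W)) (φ x))
      (deriv (deriv (deriv (deriv W))) (φ x) * deriv φ x) x := fun x => (dW3 _).comp x (dφ0 x)
  have E2 : ∀ x, C1s s * FL s (deriv (deriv φ)) x = deriv (deriv W) (φ x) * deriv (deriv φ) x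
      + deriv (deriv (deriv W)) (φ x) * deriv φ x * deriv φ x := fun x => by
    rw [add_comm]
    exact FL_deriv_eq hs hn1 hn2 E1 ((dA x).mul (dφ1 x))
  obtain ⟨K3, hK3, b3⟩ : ∃ K, 0 < K ∧ ∀ x, |deriv (deriv (deriv φ)) x| ≤ K * bar s x := by
    refine lin_deriv_decay hs (half_pos hα) hn2 (tendsto_of_le_bar h0 b2)
      (f := fun x => deriv (deriv (deriv W)) (φ x) * deriv φ x * deriv φ x)
      (G₂ := (B4 * K1 * K1 + B3 * K2) * K1 + B3 * K1 * K2)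
      E2 dA bA (fun x => ((dA1 x).mul (dφ1 x)).mul (dφ1 x)) (fun x => ?_) hR
    have m1 : |deriv φ x| ≤ K1 := (b1 x).trans (by nlinarith [bar1 x])
    have m2 : |deriv (deriv φ) x| ≤ K2 := (b2 x).trans (by nlinarith [bar1 x])
    have n3 := hB3 _ (hmem x)
    have n4 := hB4 _ (hmem x)
    have p1 : |deriv (deriv (deriv (deriv W))) (φ x) * deriv φ x * deriv φ x +
        deriv (deriv (deriv W)) (φ x) * deriv (deriv φ) x| ≤ B4 * K1 * K1 + B3 * K2 := by
      refine (abs_add_le _ _).trans ?_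
      simp only [abs_mul]
      gcongr
    have p2 : |deriv (deriv (deriv W)) (φ x) * deriv φ x| ≤ B3 * K1 := by
      rw [abs_mul]; gcongr
    refine (abs_add_le _ _).trans ?_
    rw [abs_mul, abs_mul, add_mul _ _ (bar s x)]
    refine add_le_add ?_ ?_
    · rw [mul_assoc (B4 * K1 * K1 + B3 * K2)]
      exact mul_le_mul p1 (b1 x) (abs_nonneg _) ((abs_nonneg _).trans p1)
    · rw [mul_assoc (B3 * K1)]
      exact mul_le_mul p2 (b2 x) (abs_nonneg _) ((abs_nonneg _).trans p2)
  refine ⟨K1 + K2 + K3 + B2 + B3 + B4, R, by positivity, hmem, hn0, hn1, hn2, fun x => ?_,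
    fun x => ?_, fun x => ?_, fun x => ?_, fun x => ?_, fun x => ?_, hR⟩
  · exact (b1 x).trans (mul_le_mul_of_nonneg_right (by linarith) (bar_pos s x).le)
  · exact (b2 x).trans (mul_le_mul_of_nonneg_right (by linarith) (bar_pos s x).le)
  · exact (b3 x).trans (mul_le_mul_of_nonneg_right (by linarith) (bar_pos s x).le)
  · linarith [hB2 _ (hmem x)]
  · linarith [hB3 _ (hmem x)]
  · linarith [hB4 _ (hmem x)]

/-- The corrector equation gives the decay of the first derivative of `ψ`, and the differentiated
equation that of the second. -/
lemma corrector_deriv_decay {s : ℝ} (hs : s ∈ Ioo (0:ℝ) 1) {W φ ψ : ℝ → ℝ} {L : ℝ}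
    (hW : WAssump s W) {K R : ℝ} (D : LayerData s W φ K R) (hψ : IsCorrector s L W φ ψ) :
    ∃ K', 0 < K' ∧ (∀ x, |deriv ψ x| ≤ K' * bar s x) ∧
      ∀ x, |deriv (deriv ψ) x| ≤ K' * bar s x := by
  obtain ⟨⟨β, -, hWc, -⟩, -, -, -, hα, -⟩ := hW
  obtain ⟨hψc, ⟨M, hM⟩, hψeq, hbot, htop⟩ := hψ
  have h0 := hs.1
  have hK := D.Kpos
  have hM0 : 0 ≤ M := (abs_nonneg _).trans (hM 0)
  simp only [iteratedDeriv_succ, iteratedDeriv_zero] at hα hψeq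
  set α := deriv (deriv W) 0 with hαdef
  generalize (L / ∫ y : ℝ, (deriv φ y) ^ 2) = c at hψeq
  have cW1 : ContDiff ℝ (3:ℕ) (deriv W) := deriv_contDiff (by exact_mod_cast hWc)
  have cW2 : ContDiff ℝ (2:ℕ) (deriv (deriv W)) := deriv_contDiff cW1
  have cW3 : ContDiff ℝ (1:ℕ) (deriv (deriv (deriv W))) := deriv_contDiff cW2
  have cψ1 : ContDiff ℝ (2:ℕ) (deriv ψ) := deriv_contDiff (by exact_mod_cast hψc)
  have cψ1' : ContDiff ℝ 2 (deriv ψ) := by exact_mod_cast cψ1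
  have cψ0' : ContDiff ℝ 2 ψ := hψc.of_le (by norm_num)
  have dφ0 : ∀ x, HasDerivAt φ (deriv φ x) x := fun x =>
    (D.nice.1.differentiable (by norm_num) x).hasDerivAt
  have dφ1 : ∀ x, HasDerivAt (deriv φ) (deriv (deriv φ) x) x := fun x =>
    (D.nice1.1.differentiable (by norm_num) x).hasDerivAt
  have dφ2 : ∀ x, HasDerivAt (deriv (deriv φ)) (deriv (deriv (deriv φ)) x) x := fun x =>
    (D.nice2.1.differentiable (by norm_num) x).hasDerivAt
  have dψ0 : ∀ x, HasDerivAt ψ (deriv ψ x) x := fun x =>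
    (cψ0'.differentiable (by norm_num) x).hasDerivAt
  have dW2 : ∀ x, HasDerivAt (deriv (deriv W)) (deriv (deriv (deriv W)) x) x := fun x =>
    (cW2.differentiable (by norm_num) x).hasDerivAt
  have dW3 : ∀ x, HasDerivAt (deriv (deriv (deriv W))) (deriv (deriv (deriv (deriv W))) x) x :=
    fun x => (cW3.differentiable (by norm_num) x).hasDerivAt
  have dA : ∀ x, HasDerivAt (fun x => deriv (deriv W) (φ x))
      (deriv (deriv (deriv W)) (φ x) * deriv φ x) x := fun x => (dW2 _).comp x (dφ0 x)
  have dA2 : ∀ x, HasDerivAt (fun x => deriv (deriv (deriv W)) (φ x) * deriv φ x)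
      (deriv (deriv (deriv (deriv W))) (φ x) * deriv φ x * deriv φ x +
        deriv (deriv (deriv W)) (φ x) * deriv (deriv φ) x) x :=
    fun x => ((dW3 _).comp x (dφ0 x)).mul (dφ1 x)
  have hn0 : Nice ψ := ⟨cψ0', M, hM⟩
  have hz : Tendsto ψ (cocompact ℝ) (nhds 0) := by
    rw [cocompact_eq_atBot_atTop, tendsto_sup]; exact ⟨hbot, htop⟩
  have bar1 := bar_le_one h0
  have bA : ∀ x, |deriv (deriv (deriv W)) (φ x) * deriv φ x| ≤ (K * K) * bar s x := fun x => by
    rw [abs_mul, mul_assoc]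
    exact mul_le_mul (D.w3 x) (D.d1 x) (abs_nonneg _) hK.le
  have bA2 : ∀ x, |deriv (deriv (deriv (deriv W))) (φ x) * deriv φ x * deriv φ x +
        deriv (deriv (deriv W)) (φ x) * deriv (deriv φ) x| ≤ (K * K * K + K * K) * bar s x := by
    intro x
    refine (abs_add_le _ _).trans ?_
    simp only [abs_mul]
    have m1 : |deriv φ x| ≤ K := (D.d1 x).trans (by nlinarith [bar1 x])
    have e1 : |deriv (deriv (deriv (deriv W))) (φ x)| * |deriv φ x| * |deriv φ x|
        ≤ K * K * (K * bar s x) := by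
      have := D.w4 x; have := D.d1 x
      gcongr
    have e2 : |deriv (deriv (deriv W)) (φ x)| * |deriv (deriv φ) x| ≤ K * (K * bar s x) := by
      have := D.w3 x; have := D.d2 x
      gcongr
    linarith
  have E0 : ∀ x, C1s s * FL s ψ x = deriv (deriv W) (φ x) * ψ x +
      (L / α * (deriv (deriv W) (φ x) - α) + c * deriv φ x) := fun x => by
    rw [← fracLap_eq hs hn0, hψeq]; ring
  have df : ∀ x, HasDerivAt (fun x => L / α * (deriv (deriv W) (φ x) - α) + c * deriv φ x)
      (L / α * (deriv (deriv (deriv W)) (φ x) * deriv φ x) + c * deriv (deriv φ) x) x := fun x =>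
    (((dA x).sub_const α).const_mul (L / α)).add ((dφ1 x).const_mul c)
  obtain ⟨K1, hK1, b1⟩ : ∃ K, 0 < K ∧ ∀ x, |deriv ψ x| ≤ K * bar s x := by
    refine lin_deriv_decay hs (half_pos hα) hn0 hz (G₂ := |L / α| * (K * K) + |c| * K)
      E0 dA bA df (fun x => ?_) D.conv
    refine (abs_add_le _ _).trans ?_
    rw [abs_mul (L / α), abs_mul c, add_mul]
    have := bA x; have := D.d2 x
    rw [mul_assoc |L / α|, mul_assoc |c|]
    gcongr
  have hn1 : Nice (deriv ψ) := ⟨cψ1', K1, fun x => (b1 x).trans (by nlinarith [bar1 x])⟩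
  have E1 : ∀ x, C1s s * FL s (deriv ψ) x = deriv (deriv W) (φ x) * deriv ψ x +
      (deriv (deriv (deriv W)) (φ x) * deriv φ x * ψ x +
        (L / α * (deriv (deriv (deriv W)) (φ x) * deriv φ x) + c * deriv (deriv φ) x)) := by
    intro x
    rw [FL_deriv_eq hs hn0 hn1 E0 (((dA x).mul (dψ0 x)).add (df x))]
    ring
  obtain ⟨K2, hK2, b2⟩ : ∃ K, 0 < K ∧ ∀ x, |deriv (deriv ψ) x| ≤ K * bar s x := by
    refine lin_deriv_decay hs (half_pos hα) hn1 (tendsto_of_le_bar h0 b1)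
      (G₂ := (K * K * K + K * K) * M + K * K * K1 + (|L / α| * (K * K * K + K * K) + |c| * K))
      E1 dA bA (fun x => ((dA2 x).mul (dψ0 x)).add
        (((dA2 x).const_mul (L / α)).add ((dφ2 x).const_mul c))) (fun x => ?_) D.conv
    have t1 := bA x
    have t2 := bA2 x
    have t3 := D.d3 x
    have t4 : |deriv ψ x| ≤ K1 := (b1 x).trans (by nlinarith [bar1 x])
    have u1 := mul_le_mul t2 (hM x) (abs_nonneg _) ((abs_nonneg _).trans t2)
    have u2 := mul_le_mul t1 t4 (abs_nonneg _) ((abs_nonneg _).trans t1)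
    have u3 := mul_le_mul_of_nonneg_left t2 (abs_nonneg (L / α))
    have u4 := mul_le_mul_of_nonneg_left t3 (abs_nonneg c)
    rw [← abs_mul] at u1 u2 u3 u4
    refine (abs_add_le _ _).trans ((add_le_add (abs_add_le _ _) (abs_add_le _ _)).trans ?_)
    linarith
  refine ⟨K1 + K2, by positivity, fun x => ?_, fun x => ?_⟩
  · exact (b1 x).trans (mul_le_mul_of_nonneg_right (by linarith) (bar_pos s x).le)
  · exact (b2 x).trans (mul_le_mul_of_nonneg_right (by linarith) (bar_pos s x).le)

/-! ### The odd profile -/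

/-- The odd profile `x (1+x²)^{-1/2-s}`, a smooth function asymptotic to `x/|x|^{1+2s}`. -/
noncomputable def oddProf (s x : ℝ) : ℝ := x * bar s x

lemma bar_neg (s x : ℝ) : bar s (-x) = bar s x := by unfold bar; rw [neg_sq]

lemma oddProf_neg (s x : ℝ) : oddProf s (-x) = -oddProf s x := by
  unfold oddProf; rw [bar_neg]; ring

lemma sq_mul_bar_le {s : ℝ} (hs2 : 1/2 ≤ s) (x : ℝ) : x ^ 2 * bar s x ≤ 1 := by
  have h1 : bar s x = (1 + x ^ 2) ^ (-(1/2 + s) + 1 - 1) := by unfold bar; congr 1; ring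
  have h2 : (1 + x ^ 2) * bar s x = (1 + x ^ 2) ^ (-(1/2 + s) + 1) := by
    rw [h1, jap_succ (-(1/2 + s) + 1)]; ring
  have h3 : (1 + x ^ 2) ^ (-(1/2 + s) + 1) ≤ 1 :=
    Real.rpow_le_one_of_one_le_of_nonpos (by nlinarith [sq_nonneg x]) (by linarith)
  nlinarith [bar_pos s x]

lemma abs_mul_oddProf_le {s : ℝ} (hs2 : 1/2 ≤ s) (x : ℝ) : |x| * |oddProf s x| ≤ 1 := by
  rw [← abs_mul, show x * oddProf s x = x ^ 2 * bar s x by unfold oddProf; ring,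
    abs_of_nonneg (mul_nonneg (sq_nonneg x) (bar_pos s x).le)]
  exact sq_mul_bar_le hs2 x

lemma abs_oddProf_le {s : ℝ} (hs2 : 1/2 ≤ s) {x c : ℝ} (hc : 0 < c) (h : c ≤ |x|) :
    |oddProf s x| ≤ 1 / c := by
  rw [le_div_iff₀ hc]
  have := abs_mul_oddProf_le hs2 x
  nlinarith [abs_nonneg (oddProf s x)]

lemma oddProf_nice {s : ℝ} (hs2 : 1/2 ≤ s) : Nice (oddProf s) := by
  refine ⟨contDiff_id.mul (contDiff_jap _), 1, fun x => ?_⟩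
  have h0 : 0 < s := by linarith
  rcases le_total |x| 1 with h | h
  · unfold oddProf
    rw [abs_mul, abs_of_pos (bar_pos s x)]
    exact mul_le_one₀ h (bar_pos s x).le (bar_le_one h0 x)
  · simpa using abs_oddProf_le hs2 one_pos h

lemma oddProf_tendsto {s : ℝ} (hs2 : 1/2 ≤ s) : Tendsto (oddProf s) (cocompact ℝ) (nhds 0) := by
  have h1 : Tendsto (fun x : ℝ => |x|⁻¹) (cocompact ℝ) (nhds 0) :=
    tendsto_inv_atTop_zero.comp (tendsto_norm_cocompact_atTop (E := ℝ))
  refine squeeze_zero_norm (fun x => ?_) h1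
  rcases eq_or_ne x 0 with rfl | h
  · simp [oddProf]
  · rw [Real.norm_eq_abs, ← one_div]
    exact abs_oddProf_le hs2 (abs_pos.2 h) le_rfl

lemma oddProf_deriv2 {s : ℝ} (hs : s ∈ Ioo (0:ℝ) 1) (x : ℝ) (hx : 0 < x) :
    |deriv (deriv (oddProf s)) x| ≤ 21 / x * bar s x := by
  obtain ⟨h0, h1⟩ := hs
  set k := -(1/2 + s) with hk
  have e : deriv (oddProf s) = fun x => (1 + 2 * k) * (1 + x ^ 2) ^ k
      + (-2 * k) * (1 + x ^ 2) ^ (k - 1) := by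
    funext x
    have : HasDerivAt (oddProf s) (1 * (1 + x ^ 2) ^ k + x * (2 * k * x * (1 + x ^ 2) ^ (k - 1))) x :=
      (hasDerivAt_id x).mul (hasDerivAt_jap k x)
    rw [this.deriv, jap_succ k]; ring
  have e2 := ((hasDerivAt_jap k x).const_mul (1 + 2 * k)).add
    ((hasDerivAt_jap (k - 1) x).const_mul (-2 * k))
  rw [e]
  refine (congrArg abs e2.deriv).trans_le ?_
  have hb : bar s x = (1 + x ^ 2) ^ (k - 1 - 1) * (1 + x ^ 2) * (1 + x ^ 2) := by
    unfold bar; rw [jap_succ, jap_succ (-(1/2 + s) - 1)]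
  rw [hb, jap_succ (k - 1), div_mul_eq_mul_div, le_div_iff₀ hx, ← abs_of_pos hx, ← abs_mul,
    abs_of_pos hx]
  set P := (1 + x ^ 2) ^ (k - 1 - 1) with hP
  have hP0 : 0 < P := Real.rpow_pos_of_pos (by positivity) _
  have e4 : ((1 + 2 * k) * (2 * k * x * (P * (1 + x ^ 2))) + -2 * k * (2 * (k - 1) * x * P)) * x
      = P * (x ^ 2 * (2 * k * (1 + 2 * k) * (1 + x ^ 2) - 4 * k * (k - 1))) := by ring
  rw [e4, abs_mul, abs_of_pos hP0, show 21 * (P * (1 + x ^ 2) * (1 + x ^ 2)) =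
    P * (21 * ((1 + x ^ 2) * (1 + x ^ 2))) by ring]
  refine mul_le_mul_of_nonneg_left ?_ hP0.le
  have hX : 0 ≤ x ^ 2 := sq_nonneg x
  generalize x ^ 2 = X at hX
  have k1 : 0 ≤ 2 * k * (1 + 2 * k) := by rw [hk]; nlinarith
  have k2 : 2 * k * (1 + 2 * k) ≤ 6 := by rw [hk]; nlinarith
  have k3 : 0 ≤ 4 * k * (k - 1) := by rw [hk]; nlinarith
  have k4 : 4 * k * (k - 1) ≤ 15 := by rw [hk]; nlinarith
  have k5 : |2 * k * (1 + 2 * k) * (1 + X) - 4 * k * (k - 1)| ≤ 21 * (1 + X) := by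
    rw [abs_le]; constructor <;> nlinarith
  rw [abs_mul, abs_of_nonneg hX]
  nlinarith [abs_nonneg (2 * k * (1 + 2 * k) * (1 + X) - 4 * k * (k - 1))]

lemma rpow_ker_le {s : ℝ} (hs : 0 < s) {x y : ℝ} (hx : 2 ≤ x) (hy : x / 2 ≤ y) :
    y ^ (-(1 + 2*s)) ≤ 5 ^ (1/2 + s) * bar s x := by
  have hy0 : 0 < y := by linarith
  have := abs_le_bar hs (c := 5) (x := x) (y := y) (by norm_num) hy0.ne' (by nlinarith)
  rwa [abs_of_pos hy0] at this

lemma ker_sub_le {s : ℝ} (hs : s ∈ Ioo (0:ℝ) 1) {x y : ℝ} (hx : 2 ≤ x) (hy : x / 2 ≤ y) :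
    |y ^ (-(1 + 2*s)) - x ^ (-(1 + 2*s))| ≤ 6 * 5 ^ (1/2 + s) * bar s x * (1 / x) * |x - y| := by
  obtain ⟨h0, h1⟩ := hs
  have key := (convex_Ici (x / 2)).norm_image_sub_le_of_norm_hasDerivWithin_le
    (f := fun t : ℝ => t ^ (-(1 + 2*s))) (f' := fun t : ℝ => -(1 + 2*s) * t ^ (-(1 + 2*s) - 1))
    (C := 6 * 5 ^ (1/2 + s) * bar s x * (1 / x)) (x := x) (y := y)
    (fun t ht => (Real.hasDerivAt_rpow_const (Or.inl ?_)).hasDerivWithinAt) (fun t ht => ?_)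
    (show x / 2 ≤ x by linarith) hy
  · rwa [Real.norm_eq_abs, Real.norm_eq_abs, abs_sub_comm y x] at key
  · have : x / 2 ≤ t := ht
    intro h; linarith
  · have ht1 : x / 2 ≤ t := ht
    have ht0 : 0 < t := by linarith
    have hk := rpow_ker_le h0 hx ht1
    rw [Real.norm_eq_abs, abs_mul, abs_neg, abs_of_pos (by linarith : 0 < 1 + 2*s),
      Real.rpow_sub_one ht0.ne', abs_of_pos (by positivity)]
    have i1 : t ^ (-(1 + 2*s)) / t ≤ (5 ^ (1/2 + s) * bar s x) / (x / 2) := by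
      have := bar_pos s x
      gcongr
    have i2 : 0 ≤ t ^ (-(1 + 2*s)) / t := by positivity
    calc (1 + 2*s) * (t ^ (-(1 + 2*s)) / t) ≤ 3 * ((5 ^ (1/2 + s) * bar s x) / (x / 2)) :=
          mul_le_mul (by linarith) i1 i2 (by norm_num)
      _ = _ := by field_simp; ring

lemma setIntegral_oddProf {s : ℝ} {x : ℝ} (hx : 0 ≤ x) :
    ∫ y in Ioc (x / 2) (3 * x / 2), oddProf s (x - y) = 0 := by
  rw [← intervalIntegral.integral_of_le (by linarith), intervalIntegral.integral_comp_sub_left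
    (fun t => oddProf s t), show x - 3 * x / 2 = -(x / 2) by ring, show x - x / 2 = x / 2 by ring]
  have h := intervalIntegral.integral_comp_neg (a := -(x / 2)) (b := x / 2) (fun t => oddProf s t)
  simp only [oddProf_neg, neg_neg, intervalIntegral.integral_neg] at h
  linarith

/-- `FL` of a function odd about the value `m/2` is odd. -/
lemma FL_odd {s : ℝ} {u : ℝ → ℝ} {m : ℝ} (h : ∀ t, u (-t) = m - u t) (x : ℝ) :
    FL s u (-x) = -FL s u x := by
  unfold FL
  rw [← integral_neg]
  congr 1; funext y
  have : sd u (-x) y = -sd u x y := by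
    unfold sd
    rw [show -x + y = -(x - y) by ring, show -x - y = -(x + y) by ring, h, h, h]; ring
  rw [this]; ring

/-- The integral defining `FL` splits at `y = x/2` and `y = 3x/2`. On the middle interval
`oddProf (x-y)` is not small near `y = x`, but it integrates to zero against the constant
`x^{-1-2s}`; against the increment of the kernel it is bounded by `|t oddProf t| ≤ 1`. -/
lemma FL_oddProf_pos {s : ℝ} (hs : s ∈ Ioo (0:ℝ) 1) (hs2 : 1/2 ≤ s) :
    ∃ C, ∀ x, 2 ≤ x → |FL s (oddProf s) x| ≤ C * bar s x := by
  have h0 := hs.1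
  set Ik := ∫ y in Ioi (0:ℝ), kerMaj s y with hIk
  set Q : ℝ := 5 ^ (1/2 + s) with hQ
  have hQ0 : 0 < Q := by positivity
  refine ⟨84 * Q * (Ik + 2) + 5 / (2*s) * Q, fun x hx => ?_⟩
  have hx0 : 0 < x := by linarith
  have hbx := bar_pos s x
  have hn := oddProf_nice hs2
  set g : ℝ → ℝ := fun y => sd (oddProf s) x y * y ^ (-(1 + 2*s))
    - x ^ (-(1 + 2*s)) * (Ioc (x / 2) (3 * x / 2)).indicator (fun y => oddProf s (x - y)) y with hg
  have hcont : Continuous (fun y => oddProf s (x - y)) :=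
    hn.1.continuous.comp (continuous_const.sub continuous_id)
  -- Oddness lets the kernel be replaced by its increment near `y = x`.
  have hFL : FL s (oddProf s) x = ∫ y in Ioi (0:ℝ), g y := by
    have hi : Integrable ((Ioc (x / 2) (3 * x / 2)).indicator (fun y => oddProf s (x - y))) :=
      (integrable_indicator_iff measurableSet_Ioc).2 (hcont.integrableOn_Ioc)
    rw [hg, integral_sub (FL_integrable hs hn x) (hi.integrableOn.const_mul _), integral_const_mul,
      setIntegral_indicator measurableSet_Ioc, inter_eq_right.2 (fun y hy => ?_),
      setIntegral_oddProf hx0.le, mul_zero, sub_zero]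
    · rfl
    · exact (by linarith [hy.1] : (0:ℝ) < y)
  set m : ℝ → ℝ := fun y => 84 * Q * bar s x * (kerMaj s y + 1 / x * (Ioc 0 (2 * x)).indicator 1 y)
    + 5 / x * (Ioi x).indicator (fun y => y ^ (-(1 + 2*s))) y with hm
  have i1 : IntegrableOn (fun y => (1:ℝ) / x * (Ioc 0 (2 * x)).indicator 1 y) (Ioi 0) := by
    refine Integrable.const_mul ?_ _
    exact ((integrable_indicator_iff measurableSet_Ioc).2
      (continuous_one.integrableOn_Ioc)).integrableOn
  have i2 : IntegrableOn (fun y => (Ioi x).indicator (fun y : ℝ => y ^ (-(1 + 2*s))) y) (Ioi 0) :=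
    ((integrable_indicator_iff measurableSet_Ioi).2
      (integrableOn_Ioi_rpow_of_lt (by linarith) hx0)).integrableOn
  have hmi : IntegrableOn m (Ioi 0) :=
    (((kerMaj_integrable hs).add i1).const_mul _).add (i2.const_mul _)
  have hmI : ∫ y in Ioi (0:ℝ), m y = 84 * Q * bar s x * (Ik + 2) + 5 / (2*s) * x ^ (-(1 + 2*s)) := by
    have j1 : ∫ y in Ioi (0:ℝ), (Ioc 0 (2 * x)).indicator (1 : ℝ → ℝ) y = 2 * x := by
      rw [setIntegral_indicator measurableSet_Ioc, inter_eq_right.2 (fun y hy => hy.1)]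
      simp [hx0.le]
    have j2 : ∫ y in Ioi (0:ℝ), (Ioi x).indicator (fun y : ℝ => y ^ (-(1 + 2*s))) y
        = x ^ (-(2*s)) / (2*s) := by
      rw [setIntegral_indicator measurableSet_Ioi,
        inter_eq_right.2 (Ioi_subset_Ioi hx0.le),
        integral_Ioi_rpow_of_lt (by linarith) hx0, show -(1 + 2*s) + 1 = -(2*s) by ring,
        neg_div_neg_eq]
    have i3 : IntegrableOn (fun y => kerMaj s y + 1 / x * (Ioc 0 (2 * x)).indicator 1 y) (Ioi 0) :=
      (kerMaj_integrable hs).add i1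
    simp only [hm]
    rw [integral_add (i3.const_mul _) (i2.const_mul _),
      integral_const_mul, integral_const_mul, integral_add (kerMaj_integrable hs) i1,
      integral_const_mul, j1, j2, show -(1 + 2*s) = -(2*s) - 1 by ring, Real.rpow_sub_one hx0.ne', ← hIk]
    field_simp
  have hgm : ∀ y ∈ Ioi (0:ℝ), ‖g y‖ ≤ m y := by
    intro y hy
    have hy0 : (0:ℝ) < y := hy
    have hyp : 0 < y ^ (-(1 + 2*s)) := Real.rpow_pos_of_pos hy0 _
    have hk := kerMaj_nonneg s hy0
    have ax := abs_oddProf_le hs2 (x := x) hx0 (le_abs_self x)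
    have ap := abs_oddProf_le hs2 (x := x + y) hx0 ((by linarith : x ≤ x + y).trans (le_abs_self _))
    rw [Real.norm_eq_abs]
    have hx1 : 1 / x ≤ 1 := by rw [div_le_one hx0]; linarith
    have hx1' : 0 < 1 / x := by positivity
    rcases le_or_gt y (x / 2) with h | h
    · have e1 : g y = sd (oddProf s) x y * y ^ (-(1 + 2*s)) := by
        simp only [hg]
        rw [indicator_of_notMem (fun h' => absurd h'.1 (not_lt.2 h))]; ring
      have e2 : m y = 84 * Q * bar s x * (kerMaj s y + 1 / x) := by
        simp only [hm]
        rw [indicator_of_notMem (s := Ioi x) (fun h' => by have : x < y := h'; linarith),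
          indicator_of_mem (s := Ioc 0 (2 * x)) ⟨hy0, by linarith⟩]; simp
      have hsd : |sd (oddProf s) x y| ≤ 2 * (21 / (x / 2) * (Q * bar s x)) * y ^ 2 := by
        refine sd_le hn.1 hy0.le fun t ht => ?_
        have ht0 : x / 2 ≤ t := by linarith [ht.1]
        have hb : bar s t ≤ Q * bar s x := bar_cmp h0 (by norm_num) (by nlinarith)
        refine (oddProf_deriv2 hs t (by linarith)).trans ?_
        have := bar_pos s t
        gcongr
      have hker : y ^ 2 * y ^ (-(1 + 2*s)) ≤ kerMaj s y + 1 := by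
        rcases le_total y 1 with h' | h'
        · have : kerMaj s y = y ^ 2 * y ^ (-(1 + 2*s)) := by
            unfold kerMaj; rw [min_eq_right (by nlinarith)]
          linarith
        · have : y ^ 2 * y ^ (-(1 + 2*s)) = y ^ (1 - 2*s) := by
            rw [← Real.rpow_natCast, ← Real.rpow_add hy0]; congr 1; push_cast; ring
          rw [this]
          linarith [Real.rpow_le_one_of_one_le_of_nonpos h' (by linarith : 1 - 2*s ≤ 0)]
      rw [e1, e2, abs_mul, abs_of_pos hyp]
      calc |sd (oddProf s) x y| * y ^ (-(1 + 2*s))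
          ≤ (2 * (21 / (x / 2) * (Q * bar s x)) * y ^ 2) * y ^ (-(1 + 2*s)) :=
            mul_le_mul_of_nonneg_right hsd hyp.le
        _ = 84 * Q * bar s x * (1 / x * (y ^ 2 * y ^ (-(1 + 2*s)))) := by field_simp; ring
        _ ≤ 84 * Q * bar s x * (1 / x * (kerMaj s y + 1)) := by gcongr
        _ ≤ _ := by
            refine mul_le_mul_of_nonneg_left ?_ (by positivity)
            nlinarith
    · have hyk := rpow_ker_le h0 hx h.le
      rcases le_or_gt y (3 * x / 2) with h2 | h2
      · have e1 : g y = (oddProf s (x + y) - 2 * oddProf s x) * y ^ (-(1 + 2*s))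
            + oddProf s (x - y) * (y ^ (-(1 + 2*s)) - x ^ (-(1 + 2*s))) := by
          simp only [hg]
          rw [indicator_of_mem (s := Ioc (x / 2) (3 * x / 2)) ⟨h, h2⟩]; unfold sd; ring
        have e2 : 84 * Q * bar s x * (1 / x) ≤ m y := by
          have : 0 ≤ (Ioi x).indicator (fun y : ℝ => y ^ (-(1 + 2*s))) y :=
            indicator_nonneg (fun z hz => Real.rpow_nonneg (hx0.trans hz).le _) y
          simp only [hm]
          rw [indicator_of_mem (s := Ioc 0 (2 * x)) ⟨hy0, by linarith⟩]
          simp only [Pi.one_apply, mul_one]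
          have : 0 ≤ 5 / x * (Ioi x).indicator (fun y : ℝ => y ^ (-(1 + 2*s))) y := by positivity
          have : 0 ≤ 84 * Q * bar s x * kerMaj s y := by positivity
          linarith
        refine le_trans ?_ e2
        rw [e1]
        have t1 : |(oddProf s (x + y) - 2 * oddProf s x) * y ^ (-(1 + 2*s))|
            ≤ (3 * (1 / x)) * (Q * bar s x) := by
          rw [abs_mul, abs_of_pos hyp]
          refine mul_le_mul ?_ hyk hyp.le (by positivity)
          rw [abs_le] at ax ap ⊢; constructor <;> linarith [ax.1, ax.2, ap.1, ap.2]
        have t2 : |oddProf s (x - y) * (y ^ (-(1 + 2*s)) - x ^ (-(1 + 2*s)))|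
            ≤ 6 * Q * bar s x * (1 / x) := by
          rw [abs_mul]
          have u1 := mul_le_mul_of_nonneg_left (ker_sub_le hs hx h.le)
            (abs_nonneg (oddProf s (x - y)))
          have u2 := mul_le_mul_of_nonneg_left (abs_mul_oddProf_le hs2 (x - y))
            (by positivity : 0 ≤ 6 * Q * bar s x * (1 / x))
          nlinarith
        refine (abs_add_le _ _).trans ?_
        have : 0 < Q * bar s x * (1 / x) := by positivity
        linarith
      · have e1 : g y = sd (oddProf s) x y * y ^ (-(1 + 2*s)) := by
          simp only [hg]
          rw [indicator_of_notMem (fun h' => absurd h'.2 (not_le.2 h2))]; ring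
        have e2 : 5 / x * y ^ (-(1 + 2*s)) ≤ m y := by
          have : 0 ≤ (Ioc 0 (2 * x)).indicator (1 : ℝ → ℝ) y :=
            indicator_nonneg (fun _ _ => zero_le_one) y
          simp only [hm]
          rw [indicator_of_mem (s := Ioi x) (show x < y by linarith)]
          have : 0 ≤ 84 * Q * bar s x * (kerMaj s y + 1 / x * (Ioc 0 (2 * x)).indicator 1 y) := by
            positivity
          linarith
        refine le_trans ?_ e2
        rw [e1, abs_mul, abs_of_pos hyp]
        refine mul_le_mul_of_nonneg_right ?_ hyp.le
        have am := abs_oddProf_le hs2 (x := x - y) (c := x / 2) (by positivity)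
          (by rw [abs_sub_comm]; exact (by linarith : x / 2 ≤ y - x).trans (le_abs_self _))
        rw [show 1 / (x / 2) = 2 * (1 / x) by field_simp] at am
        rw [show 5 / x = 5 * (1 / x) by ring]
        unfold sd
        rw [abs_le] at ax ap am ⊢
        constructor <;> linarith [ax.1, ax.2, ap.1, ap.2, am.1, am.2]
  rw [hFL, ← Real.norm_eq_abs]
  refine (norm_integral_le_of_norm_le hmi ((ae_restrict_mem measurableSet_Ioi).mono hgm)).trans ?_
  rw [hmI]
  have k1 := rpow_ker_le h0 hx (by linarith : x / 2 ≤ x)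
  have k2 := mul_le_mul_of_nonneg_left k1 (by positivity : 0 ≤ 5 / (2*s))
  linarith

lemma FL_oddProf {s : ℝ} (hs : s ∈ Ioo (0:ℝ) 1) (hs2 : 1/2 ≤ s) :
    ∃ C, ∀ x, 2 ≤ |x| → |FL s (oddProf s) x| ≤ C * bar s x := by
  obtain ⟨C, hC⟩ := FL_oddProf_pos hs hs2
  refine ⟨C, fun x hx => ?_⟩
  rcases le_abs.1 hx with h | h
  · exact hC x h
  · have := hC (-x) h
    rwa [FL_odd (m := 0) (fun t => by rw [oddProf_neg]; ring), abs_neg, bar_neg] at this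

lemma oddProf_sub_le {s : ℝ} (hs : s ∈ Ioo (0:ℝ) 1) {x : ℝ} (hx : 1 ≤ |x|) :
    |oddProf s x - x * |x| ^ (-(1 + 2*s))| ≤ 2 * |x| ^ (-(1 + 2*s)) := by
  obtain ⟨h0, h1⟩ := hs
  have hxx : 0 < |x| := by linarith
  have hx2 : 0 < x ^ 2 := by rw [← sq_abs]; positivity
  have hP : 0 < |x| ^ (-(1 + 2*s)) := Real.rpow_pos_of_pos hxx _
  have hx0 : x ≠ 0 := abs_pos.1 hxx
  have hle := bar_le_abs h0 hx0
  have hge : (1 - (1/2 + s) * (1 / x ^ 2)) * |x| ^ (-(1 + 2*s)) ≤ bar s x := by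
    have e : bar s x = (1 + 1 / x ^ 2) ^ (-(1/2 + s)) * |x| ^ (-(1 + 2*s)) := by
      rw [abs_rpow_eq, ← Real.mul_rpow (by positivity) hx2.le, add_mul, one_div_mul_cancel hx2.ne']
      unfold bar; congr 1; ring
    rw [e]
    refine mul_le_mul_of_nonneg_right ?_ hP.le
    set t := 1 / x ^ 2
    have ht : 0 < t := by positivity
    rw [Real.rpow_def_of_pos (by linarith)]
    have l1 : Real.log (1 + t) ≤ t := by
      have := Real.log_le_sub_one_of_pos (by linarith : 0 < 1 + t); linarith
    have l2 := Real.add_one_le_exp (Real.log (1 + t) * -(1/2 + s))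
    nlinarith
  have e : oddProf s x - x * |x| ^ (-(1 + 2*s)) = -(x * (|x| ^ (-(1 + 2*s)) - bar s x)) := by
    unfold oddProf; ring
  rw [e, abs_neg, abs_mul, abs_of_nonneg (sub_nonneg.2 hle)]
  have k1 : |x| ^ (-(1 + 2*s)) - bar s x ≤ (1/2 + s) * (1 / x ^ 2) * |x| ^ (-(1 + 2*s)) := by
    linarith
  have k2 : |x| * (1 / x ^ 2) ≤ 1 := by
    rw [mul_one_div, div_le_one hx2, ← sq_abs]; nlinarith
  calc |x| * (|x| ^ (-(1 + 2*s)) - bar s x)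
      ≤ |x| * ((1/2 + s) * (1 / x ^ 2) * |x| ^ (-(1 + 2*s))) := by gcongr
    _ = (1/2 + s) * (|x| * (1 / x ^ 2)) * |x| ^ (-(1 + 2*s)) := by ring
    _ ≤ 2 * |x| ^ (-(1 + 2*s)) := by
      refine mul_le_mul_of_nonneg_right ?_ hP.le
      have : 0 ≤ |x| * (1 / x ^ 2) := by positivity
      nlinarith

/-! ### The smooth step and Taylor estimates -/

/-- A smooth step from `0` (left of `-1`) to `1` (right of `1`), odd about the value `1/2`. -/
noncomputable def step (x : ℝ) : ℝ := Real.smoothTransition ((x + 1) / 2)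

lemma step_mem (x : ℝ) : step x ∈ Icc (0:ℝ) 1 :=
  ⟨Real.smoothTransition.nonneg _, Real.smoothTransition.le_one _⟩

lemma step_one {x : ℝ} (h : 1 ≤ x) : step x = 1 :=
  Real.smoothTransition.one_of_one_le (by linarith)

lemma step_zero {x : ℝ} (h : x ≤ -1) : step x = 0 :=
  Real.smoothTransition.zero_of_nonpos (by linarith)

lemma step_neg (x : ℝ) : step (-x) = 1 - step x := by
  unfold step Real.smoothTransition
  have h := Real.smoothTransition.pos_denom ((x + 1) / 2)
  rw [show (-x + 1) / 2 = 1 - (x + 1) / 2 by ring, sub_sub_cancel]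
  rw [add_comm (expNegInvGlue (1 - _)), eq_sub_iff_add_eq, ← add_div, add_comm, div_self h.ne']

lemma step_nice : Nice step := by
  refine ⟨?_, 1, fun x => ?_⟩
  · have : ContDiff ℝ 2 Real.smoothTransition := Real.smoothTransition.contDiff (n := 2)
    exact this.comp (by fun_prop)
  · have := step_mem x
    rw [abs_of_nonneg this.1]; exact this.2

/-- For `y` outside `(x-1, x+1]` the second difference of the step at `x` is that of the Heaviside
function, whose fractional Laplacian is `-x^{-2s}/(2s)`. -/
lemma FL_step_pos {s : ℝ} (hs : s ∈ Ioo (0:ℝ) 1) {x : ℝ} (hx : 2 ≤ x) :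
    |FL s step x + x ^ (-(2*s)) / (2*s)| ≤ 2 * 5 ^ (1/2 + s) * bar s x := by
  have h0 := hs.1
  have hx0 : 0 < x := by linarith
  have hbx := bar_pos s x
  have i2 : IntegrableOn (fun y => (Ioi x).indicator (fun y : ℝ => y ^ (-(1 + 2*s))) y) (Ioi 0) :=
    ((integrable_indicator_iff measurableSet_Ioi).2
      (integrableOn_Ioi_rpow_of_lt (by linarith) hx0)).integrableOn
  have j2 : ∫ y in Ioi (0:ℝ), (Ioi x).indicator (fun y : ℝ => y ^ (-(1 + 2*s))) y
      = x ^ (-(2*s)) / (2*s) := by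
    rw [setIntegral_indicator measurableSet_Ioi, inter_eq_right.2 (Ioi_subset_Ioi hx0.le),
      integral_Ioi_rpow_of_lt (by linarith) hx0, show -(1 + 2*s) + 1 = -(2*s) by ring,
      neg_div_neg_eq]
  rw [← j2]
  unfold FL
  rw [← integral_add (FL_integrable hs step_nice x) i2, ← Real.norm_eq_abs]
  set m : ℝ → ℝ := fun y => 5 ^ (1/2 + s) * bar s x * (Ioc (x - 1) (x + 1)).indicator 1 y with hm
  have hmi : IntegrableOn m (Ioi 0) := by
    refine Integrable.const_mul ?_ _
    exact ((integrable_indicator_iff measurableSet_Ioc).2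
      (continuous_one.integrableOn_Ioc)).integrableOn
  have hmI : ∫ y in Ioi (0:ℝ), m y = 2 * 5 ^ (1/2 + s) * bar s x := by
    have j1 : ∫ y in Ioi (0:ℝ), (Ioc (x - 1) (x + 1)).indicator (1 : ℝ → ℝ) y = 2 := by
      have hsub : Ioc (x - 1) (x + 1) ⊆ Ioi 0 := fun y hy =>
        (by linarith [hy.1] : (0:ℝ) < y)
      rw [setIntegral_indicator measurableSet_Ioc, inter_eq_right.2 hsub]
      simp only [Pi.one_apply, integral_const, MeasurableSet.univ, measureReal_restrict_apply,
        univ_inter, Real.volume_real_Ioc, smul_eq_mul, mul_one]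
      rw [max_eq_left] <;> linarith
    simp only [hm]
    rw [integral_const_mul, j1]; ring
  rw [← hmI]
  refine norm_integral_le_of_norm_le hmi ((ae_restrict_mem measurableSet_Ioi).mono fun y hy => ?_)
  have hy0 : (0:ℝ) < y := hy
  have hyp : 0 < y ^ (-(1 + 2*s)) := Real.rpow_pos_of_pos hy0 _
  have e0 : sd step x y = step (x - y) - 1 := by
    unfold sd; rw [step_one (by linarith : 1 ≤ x + y), step_one (by linarith : 1 ≤ x)]; ring
  rw [Real.norm_eq_abs]
  simp only [hm, e0]
  rcases le_or_gt y (x - 1) with h | h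
  · rw [step_one (by linarith), indicator_of_notMem (s := Ioi x) (fun h' => by
      have : x < y := h'
      linarith), indicator_of_notMem (fun h' => absurd h'.1 (not_lt.2 h))]
    simp
  rcases le_or_gt y (x + 1) with h2 | h2
  · rw [indicator_of_mem (s := Ioc (x - 1) (x + 1)) ⟨h, h2⟩]
    have hk := rpow_ker_le h0 hx (y := y) (by linarith)
    have hm := step_mem (x - y)
    simp only [Pi.one_apply, mul_one]
    refine le_trans ?_ hk
    by_cases h3 : x < y
    · rw [indicator_of_mem (s := Ioi x) h3, abs_le]
      constructor <;> nlinarith [hm.1, hm.2]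
    · rw [indicator_of_notMem (s := Ioi x) h3, abs_le]
      constructor <;> nlinarith [hm.1, hm.2]
  · rw [step_zero (by linarith), indicator_of_mem (s := Ioi x) (show x < y by linarith),
      indicator_of_notMem (fun h' => absurd h'.2 (not_le.2 h2))]
    simp

lemma FL_step {s : ℝ} (hs : s ∈ Ioo (0:ℝ) 1) :
    ∃ C, ∀ x, 2 ≤ |x| → |FL s step x + 1 / (2*s) * oddProf s x| ≤ C * bar s x := by
  have h0 := hs.1
  refine ⟨2 * 5 ^ (1/2 + s) + 1 / (2*s) * (2 * 5 ^ (1/2 + s)), ?_⟩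
  have pos : ∀ x, 2 ≤ x → |FL s step x + 1 / (2*s) * oddProf s x| ≤
      (2 * 5 ^ (1/2 + s) + 1 / (2*s) * (2 * 5 ^ (1/2 + s))) * bar s x := by
    intro x hx
    have hx0 : 0 < x := by linarith
    have h1 := FL_step_pos hs hx
    have h2 := oddProf_sub_le hs (x := x) (by rw [abs_of_pos hx0]; linarith)
    rw [abs_of_pos hx0] at h2
    have h3 := rpow_ker_le h0 hx (by linarith : x / 2 ≤ x)
    have e : x * x ^ (-(1 + 2*s)) = x ^ (-(2*s)) := by
      rw [show -(2*s) = -(1 + 2*s) + 1 by ring, Real.rpow_add_one hx0.ne']; ring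
    rw [e] at h2
    have e2 : FL s step x + 1 / (2*s) * oddProf s x = (FL s step x + x ^ (-(2*s)) / (2*s))
      + 1 / (2*s) * (oddProf s x - x ^ (-(2*s))) := by ring
    rw [e2]
    refine (abs_add_le _ _).trans ?_
    have hs2 : 0 < 1 / (2*s) := by positivity
    rw [abs_mul, abs_of_pos hs2, add_mul, mul_assoc (1 / (2*s))]
    refine add_le_add h1 (mul_le_mul_of_nonneg_left (by linarith) hs2.le)
  intro x hx
  rcases le_abs.1 hx with h | h
  · exact pos x h
  · have := pos (-x) h
    rwa [FL_odd step_neg, oddProf_neg, bar_neg, mul_neg, ← neg_add, abs_neg] at this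

/-- A function whose derivative is controlled by the barrier converges at the rate `x^{-2s}`. -/
lemma sub_limit_le {s : ℝ} (hs : 0 < s) {u u' : ℝ → ℝ} {K l : ℝ} (hc : Continuous u')
    (hu : ∀ x, HasDerivAt u (u' x) x) (hK : ∀ x, |u' x| ≤ K * bar s x)
    (hl : Tendsto u atTop (nhds l)) {x : ℝ} (hx : 1 ≤ x) :
    |u x - l| ≤ K / (2*s) * x ^ (-(2*s)) := by
  have hx0 : 0 < x := by linarith
  have hK0 : 0 ≤ K := by
    have := (abs_nonneg _).trans (hK 0)
    exact nonneg_of_mul_nonneg_left this (bar_pos s 0)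
  have hi : Integrable u' := ((bar_integrable hs).const_mul K).mono'
    hc.aestronglyMeasurable (Eventually.of_forall hK)
  have h1 := integral_Ioi_of_hasDerivAt_of_tendsto' (a := x) (fun t _ => hu t) hi.integrableOn hl
  rw [abs_sub_comm, ← h1, ← Real.norm_eq_abs]
  have hr := (integrableOn_Ioi_rpow_of_lt (by linarith : -(1 + 2*s) < -1) hx0).const_mul K
  refine (norm_integral_le_of_norm_le hr ((ae_restrict_mem measurableSet_Ioi).mono
    fun t ht => ?_)).trans_eq ?_
  · have ht0 : 0 < t := hx0.trans ht
    have := bar_le_abs hs ht0.ne'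
    rw [abs_of_pos ht0] at this
    exact (hK t).trans (mul_le_mul_of_nonneg_left this hK0)
  · rw [integral_const_mul, integral_Ioi_rpow_of_lt (by linarith) hx0,
      show -(1 + 2*s) + 1 = -(2*s) by ring, neg_div_neg_eq]; ring

lemma layer_sub_step {s : ℝ} (hs : 0 < s) {φ : ℝ → ℝ} {K : ℝ} (hn : ContDiff ℝ 2 φ)
    (hK : ∀ x, |deriv φ x| ≤ K * bar s x)
    (hbot : Tendsto φ atBot (nhds 0)) (htop : Tendsto φ atTop (nhds 1)) {x : ℝ} (hx : 1 ≤ |x|) :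
    |φ x - step x| ≤ K / (2*s) * |x| ^ (-(2*s)) := by
  have hd : ∀ x, HasDerivAt φ (deriv φ x) x := fun x =>
    (hn.differentiable (by norm_num) x).hasDerivAt
  have hc : Continuous (deriv φ) := hn.continuous_deriv (by norm_num)
  rcases le_abs.1 hx with h | h
  · rw [step_one h, abs_of_pos (show 0 < x by linarith)]
    exact sub_limit_le hs hc hd hK htop h
  · rw [step_zero (by linarith), abs_of_neg (show x < 0 by linarith)]
    have := sub_limit_le hs (u := fun x => φ (-x)) (u' := fun x => deriv φ (-x) * -1)
      (by fun_prop) (fun x => (hd (-x)).comp x (hasDerivAt_neg x)) (K := K)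
      (fun x => by simpa [bar_neg] using hK (-x)) (hbot.comp tendsto_neg_atTop_atBot) h
    simpa using this

/-- Quadratic Taylor estimate with a constant uniform in the base point of the unit interval. -/
lemma taylor_two {f : ℝ → ℝ} (hf : ContDiff ℝ 2 f) :
    ∃ B, ∀ j ∈ Icc (0:ℝ) 1, ∀ v ∈ Icc (0:ℝ) 1, |f v - f j - deriv f j * (v - j)| ≤ B * (v - j) ^ 2 := by
  have hf1 : ContDiff ℝ (1:ℕ) (deriv f) := deriv_contDiff (by exact_mod_cast hf)
  have hf2 : Continuous (deriv (deriv f)) := (deriv_contDiff (n := 0) hf1).continuous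
  obtain ⟨B, hB⟩ := isCompact_Icc.exists_bound_of_continuousOn
    (s := Icc (0:ℝ) 1) hf2.continuousOn
  refine ⟨B, fun j hj v hv => ?_⟩
  have hsub : uIcc j v ⊆ Icc 0 1 := uIcc_subset_Icc hj hv
  have hB0 : 0 ≤ B := (norm_nonneg _).trans (hB j hj)
  have h1 : ∀ t ∈ uIcc j v, |deriv f t - deriv f j| ≤ B * |v - j| := fun t ht => by
    have := (convex_Icc (0:ℝ) 1).norm_image_sub_le_of_norm_deriv_le (f := deriv f) (C := B)
      (fun t _ => hf1.differentiable (by norm_num) t) (fun t ht => hB t ht) hj (hsub ht)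
    exact this.trans (mul_le_mul_of_nonneg_left (abs_sub_left_of_mem_uIcc ht) hB0)
  have h2 := (convex_uIcc j v).norm_image_sub_le_of_norm_hasDerivWithin_le
    (f := fun t => f t - deriv f j * t) (f' := fun t => deriv f t - deriv f j) (C := B * |v - j|)
    (fun t _ => by
      have h3 := (hf.differentiable (by norm_num) t).hasDerivAt.sub
        ((hasDerivAt_id t).const_mul (deriv f j))
      simp only [mul_one] at h3
      exact h3.hasDerivWithinAt) h1 left_mem_uIcc right_mem_uIcc
  rw [Real.norm_eq_abs, Real.norm_eq_abs] at h2
  calc |f v - f j - deriv f j * (v - j)| = |f v - deriv f j * v - (f j - deriv f j * j)| := by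
        congr 1; ring
    _ ≤ B * |v - j| * |v - j| := h2
    _ = B * (v - j) ^ 2 := by rw [mul_assoc, abs_mul_abs_self, sq]

/-! ### First-order asymptotics of the layer and of the corrector -/

/-- Products of two terms of order `|x|^{-2s}` are `O(bar)`, since `4s ≥ 1+2s`. -/
lemma far_sq_le {s : ℝ} (hs2 : 1/2 ≤ s) {x : ℝ} (hx : 1 ≤ |x|) :
    (|x| ^ (-(2*s))) ^ 2 ≤ 2 ^ (1/2 + s) * bar s x := by
  have hxx : 0 < |x| := by linarith
  have hx0 : x ≠ 0 := abs_pos.1 hxx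
  refine le_trans ?_ (abs_le_bar (by linarith : 0 < s) two_pos hx0 ?_)
  · rw [← Real.rpow_natCast, ← Real.rpow_mul hxx.le]
    exact Real.rpow_le_rpow_of_exponent_le hx (by push_cast; linarith)
  · rw [← sq_abs]; nlinarith

lemma oddProf_far {s : ℝ} (hs : 0 < s) {x : ℝ} (hx : 1 ≤ |x|) :
    |oddProf s x| ≤ |x| ^ (-(2*s)) := by
  have hxx : 0 < |x| := by linarith
  have e : |x| ^ (-(2*s)) = |x| * |x| ^ (-(1 + 2*s)) := by
    rw [show -(2*s) = -(1 + 2*s) + 1 by ring, Real.rpow_add_one hxx.ne']; ring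
  unfold oddProf
  rw [abs_mul, abs_of_pos (bar_pos s x), e]
  exact mul_le_mul_of_nonneg_left (bar_le_abs hs (abs_pos.1 hxx)) hxx.le

lemma periodic_step {f : ℝ → ℝ} (h : ∀ v, f (v + 1) = f v) {x : ℝ} (hx : 1 ≤ |x|) :
    f (step x) = f 0 := by
  rcases le_abs.1 hx with h' | h'
  · rw [step_one h', ← h 0, zero_add]
  · rw [step_zero (by linarith)]

lemma deriv_W_zero {s : ℝ} {W : ℝ → ℝ} (hW : WAssump s W) : deriv W 0 = 0 := by
  obtain ⟨-, -, hz, hp, -, -⟩ := hW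
  refine IsLocalMin.deriv_eq_zero (Eventually.of_forall fun v => ?_)
  have h0 : W 0 = 0 := by simpa using hz 0
  rw [h0]
  by_cases h : ∃ k : ℤ, (k : ℝ) = v
  · obtain ⟨k, rfl⟩ := h
    exact (hz k).ge
  · push Not at h
    exact (hp v h).le

/-- First-order expansion of the layer at infinity. -/
lemma layer_asymp {s : ℝ} (hs : s ∈ Ioo (0:ℝ) 1) (hs2 : 1/2 ≤ s) {W φ : ℝ → ℝ}
    (hW : WAssump s W) (hφ : IsLayerSolution s W φ) {K R : ℝ} (D : LayerData s W φ K R) :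
    ∃ K0, ∀ x, |φ x - step x + C1s s / (2 * s * deriv (deriv W) 0) * oddProf s x|
      ≤ K0 * bar s x := by
  have hW0 := deriv_W_zero hW
  obtain ⟨⟨β, -, hWc, -⟩, hper, -, -, hα, -⟩ := hW
  obtain ⟨hφc, hφeq, -, hbot, htop, -⟩ := hφ
  have h0 := hs.1
  rw [iteratedDeriv_succ, iteratedDeriv_one] at hα
  have cW1 : ContDiff ℝ (3:ℕ) (deriv W) := deriv_contDiff (by exact_mod_cast hWc)
  obtain ⟨B, hB⟩ := taylor_two (cW1.of_le (by norm_num))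
  have hB0 : 0 ≤ B := by
    have := (abs_nonneg _).trans (hB 0 (by simp) 1 (by simp)); simpa using this
  obtain ⟨C2, hC2⟩ := FL_step hs
  obtain ⟨C3, hC3⟩ := FL_oddProf hs hs2
  have hC := C1s_pos hs
  set α := deriv (deriv W) 0 with hαd
  set κ := C1s s / (2 * s * α) with hκ
  have hκα : α * κ = C1s s * (1 / (2*s)) := by rw [hκ]; field_simp
  have hκ0 : 0 < κ := by positivity
  have hn1 := D.nice.lin step_nice 1 (-1)
  have hn := hn1.lin (oddProf_nice hs2) 1 κ
  obtain ⟨M, hM⟩ := hn.2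
  obtain ⟨K0, -, h⟩ := decay hs hα 2 M
    (B * ((K / (2*s)) ^ 2 * 2 ^ (1/2 + s)) + C1s s * C2 + κ * C1s s * C3)
  refine ⟨K0, fun x => ?_⟩
  have key := h _ hn ?_ (fun x _ => hM x) (fun x hx => ⟨α, le_rfl, ?_⟩) x
  · convert key using 2; ring
  · have t1 : Tendsto (fun x => 1 * φ x + (-1) * step x) (cocompact ℝ) (nhds 0) := by
      rw [cocompact_eq_atBot_atTop, tendsto_sup]
      constructor
      · have : Tendsto step atBot (nhds 0) := tendsto_const_nhds.congr'
          ((eventually_le_atBot (-1)).mono fun x hx => (step_zero hx).symm)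
        simpa using (hbot.const_mul 1).add (this.const_mul (-1))
      · have : Tendsto step atTop (nhds 1) := tendsto_const_nhds.congr'
          ((eventually_ge_atTop 1).mono fun x hx => (step_one hx).symm)
        simpa using (htop.const_mul 1).add (this.const_mul (-1))
    simpa using (t1.const_mul 1).add ((oddProf_tendsto hs2).const_mul κ)
  · have hx1 : 1 ≤ |x| := by linarith
    have T := hB (step x) (step_mem x) (φ x) (D.mem x)
    rw [periodic_step (deriv_periodic hper) hx1, hW0,
      periodic_step (deriv_periodic (deriv_periodic hper)) hx1, sub_zero, ← hαd] at T
    have d := layer_sub_step h0 D.nice.1 D.d1 hbot htop hx1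
    have d2 : (φ x - step x) ^ 2 ≤ (K / (2*s)) ^ 2 * (2 ^ (1/2 + s) * bar s x) := by
      rw [← sq_abs]
      refine (pow_le_pow_left₀ (abs_nonneg _) d 2).trans ?_
      rw [mul_pow]
      exact mul_le_mul_of_nonneg_left (far_sq_le hs2 hx1) (sq_nonneg _)
    have b2 := hC2 x hx.le
    have b3 := hC3 x hx.le
    have E0 : C1s s * FL s φ x = deriv W (φ x) := by rw [← fracLap_eq hs D.nice, hφeq]
    rw [FL_lin hs hn1 (oddProf_nice hs2), FL_lin hs D.nice step_nice]
    have e : C1s s * (1 * (1 * FL s φ x + -1 * FL s step x) + κ * FL s (oddProf s) x)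
        - α * (1 * (1 * φ x + -1 * step x) + κ * oddProf s x)
        = (deriv W (φ x) - α * (φ x - step x)) + (-(C1s s * (FL s step x + 1 / (2*s) * oddProf s x))
          + κ * C1s s * FL s (oddProf s) x) := by
      rw [← E0]; linear_combination (-oddProf s x) * hκα
    rw [e]
    have T' := T.trans (mul_le_mul_of_nonneg_left d2 hB0)
    have b2' := mul_le_mul_of_nonneg_left b2 hC.le
    have b3' := mul_le_mul_of_nonneg_left b3 (mul_pos hκ0 hC).le
    refine (abs_add_le _ _).trans ((add_le_add le_rfl (abs_add_le _ _)).trans ?_)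
    rw [abs_neg, abs_mul, abs_of_pos hC, abs_mul (κ * C1s s), abs_of_pos (mul_pos hκ0 hC)]
    linarith

/-- Expansion of the corrector at infinity for `s ≥ 1/2`. -/
lemma corrector_asymp {s : ℝ} (hs : s ∈ Ioo (0:ℝ) 1) (hs2 : 1/2 ≤ s) {W φ ψ : ℝ → ℝ} {L : ℝ}
    (hW : WAssump s W) (hφ : IsLayerSolution s W φ) {K R : ℝ} (D : LayerData s W φ K R)
    (hψ : IsCorrector s L W φ ψ) :
    ∃ K₂ K', ∀ x, |ψ x - K₂ * oddProf s x| ≤ K' * bar s x := by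
  obtain ⟨K0, hK0⟩ := layer_asymp hs hs2 hW hφ D
  obtain ⟨⟨β, -, hWc, -⟩, hper, -, -, hα, -⟩ := hW
  obtain ⟨-, -, -, hbot, htop, -⟩ := hφ
  obtain ⟨hψc, ⟨M, hM⟩, hψeq, hψbot, hψtop⟩ := hψ
  have h0 := hs.1
  simp only [iteratedDeriv_succ, iteratedDeriv_zero] at hα hψeq
  have cW1 : ContDiff ℝ (3:ℕ) (deriv W) := deriv_contDiff (by exact_mod_cast hWc)
  have cW2 : ContDiff ℝ (2:ℕ) (deriv (deriv W)) := deriv_contDiff cW1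
  obtain ⟨B, hB⟩ := taylor_two (f := deriv (deriv W)) (by exact_mod_cast cW2)
  have hB0 : 0 ≤ B := by
    have := (abs_nonneg _).trans (hB 0 (by simp) 1 (by simp)); simpa using this
  obtain ⟨C3, hC3⟩ := FL_oddProf hs hs2
  have hC := C1s_pos hs
  set α := deriv (deriv W) 0 with hαd
  set γ := deriv (deriv (deriv W)) 0 with hγd
  set κ := C1s s / (2 * s * α) with hκ
  generalize (L / ∫ y : ℝ, (deriv φ y) ^ 2) = c at hψeq
  -- This value cancels the terms of order `oddProf` in the equation for `ψ - K₂ * oddProf`.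
  set K₂ := L * γ * κ / α ^ 2 with hK₂
  have hK₂α : K₂ * α = L / α * γ * κ := by rw [hK₂]; field_simp
  have hnψ : Nice ψ := ⟨hψc.of_le (by norm_num), M, hM⟩
  have hn := hnψ.lin (oddProf_nice hs2) 1 (-K₂)
  obtain ⟨N, hN⟩ := hn.2
  have hKs : 0 ≤ K / (2*s) := by have := D.Kpos; positivity
  set P : ℝ := 2 ^ (1/2 + s) with hP
  set T0 := B * ((K / (2*s)) ^ 2 * P) with hT0
  obtain ⟨K', -, h⟩ := decay hs (half_pos hα) (max R 2) N
    (|L / α| * (T0 + |γ| * K0) + |c| * K + |K₂| * (C1s s * C3)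
      + |K₂| * (T0 + |γ| * (K / (2*s) * P)))
  refine ⟨K₂, K', fun x => ?_⟩
  have key := h _ hn ?_ (fun x _ => hN x)
    (fun x hx => ⟨deriv (deriv W) (φ x), D.conv x ((le_max_left _ _).trans hx.le), ?_⟩) x
  · convert key using 2; ring
  · have t1 : Tendsto ψ (cocompact ℝ) (nhds 0) := by
      rw [cocompact_eq_atBot_atTop, tendsto_sup]; exact ⟨hψbot, hψtop⟩
    simpa using (t1.const_mul 1).add ((oddProf_tendsto hs2).const_mul (-K₂))
  · have hx2 : 2 ≤ |x| := (le_max_right _ _).trans hx.le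
    have hx1 : 1 ≤ |x| := by linarith
    have hbx := bar_pos s x
    have T := hB (step x) (step_mem x) (φ x) (D.mem x)
    rw [periodic_step (deriv_periodic (deriv_periodic hper)) hx1,
      periodic_step (deriv_periodic (deriv_periodic (deriv_periodic hper))) hx1,
      ← hαd, ← hγd] at T
    have d := layer_sub_step h0 D.nice.1 D.d1 hbot htop hx1
    have fs := far_sq_le hs2 hx1
    have d2 : (φ x - step x) ^ 2 ≤ (K / (2*s)) ^ 2 * (P * bar s x) := by
      rw [← sq_abs]
      refine (pow_le_pow_left₀ (abs_nonneg _) d 2).trans ?_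
      rw [mul_pow]
      exact mul_le_mul_of_nonneg_left fs (sq_nonneg _)
    have T' : |deriv (deriv W) (φ x) - α - γ * (φ x - step x)| ≤ T0 * bar s x :=
      (T.trans (mul_le_mul_of_nonneg_left d2 hB0)).trans_eq (by rw [hT0]; ring)
    have o1 := oddProf_far h0 hx1
    have o2 : |oddProf s x| ≤ 1 := by simpa using abs_oddProf_le hs2 one_pos hx1
    have dη : |φ x - step x| * |oddProf s x| ≤ K / (2*s) * P * bar s x := by
      refine (mul_le_mul d o1 (abs_nonneg _) ((abs_nonneg _).trans d)).trans ?_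
      have := mul_le_mul_of_nonneg_left fs hKs
      rw [sq] at this
      linarith
    have b3 := hC3 x hx2
    have ρ := hK0 x
    have E0 : C1s s * FL s ψ x = deriv (deriv W) (φ x) * ψ x +
        (L / α * (deriv (deriv W) (φ x) - α) + c * deriv φ x) := by
      rw [← fracLap_eq hs hnψ, hψeq]; ring
    rw [FL_lin hs hnψ (oddProf_nice hs2)]
    set A := deriv (deriv W) (φ x) with hA
    set T1 := A - α - γ * (φ x - step x) with hT1
    set ρ1 := φ x - step x + κ * oddProf s x with hρ1
    have e : C1s s * (1 * FL s ψ x + -K₂ * FL s (oddProf s) x)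
        - A * (1 * ψ x + -K₂ * oddProf s x)
        = ((L / α) * (T1 + γ * ρ1) + c * deriv φ x) + (-(K₂ * (C1s s * FL s (oddProf s) x))
          + K₂ * (T1 * oddProf s x + γ * ((φ x - step x) * oddProf s x))) := by
      rw [hT1, hρ1]
      linear_combination E0 + oddProf s x * hK₂α
    rw [e]
    have q1 : |T1 + γ * ρ1| ≤ (T0 + |γ| * K0) * bar s x := by
      refine (abs_add_le _ _).trans ?_
      rw [abs_mul]
      have := mul_le_mul_of_nonneg_left ρ (abs_nonneg γ)
      linarith
    have q2 : |C1s s * FL s (oddProf s) x| ≤ C1s s * C3 * bar s x := by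
      rw [abs_mul, abs_of_pos hC, mul_assoc]
      exact mul_le_mul_of_nonneg_left b3 hC.le
    have q3 : |T1 * oddProf s x + γ * ((φ x - step x) * oddProf s x)|
        ≤ (T0 + |γ| * (K / (2*s) * P)) * bar s x := by
      refine (abs_add_le _ _).trans ?_
      rw [abs_mul, abs_mul γ, abs_mul (φ x - step x)]
      have u1 := mul_le_mul T' o2 (abs_nonneg _) ((abs_nonneg _).trans T')
      have u2 := mul_le_mul_of_nonneg_left dη (abs_nonneg γ)
      linarith
    have w1 := mul_le_mul_of_nonneg_left q1 (abs_nonneg (L / α))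
    have w2 := mul_le_mul_of_nonneg_left (D.d1 x) (abs_nonneg c)
    have w3 := mul_le_mul_of_nonneg_left q2 (abs_nonneg K₂)
    have w4 := mul_le_mul_of_nonneg_left q3 (abs_nonneg K₂)
    rw [← abs_mul] at w1 w2 w3 w4
    refine (abs_add_le _ _).trans ((add_le_add (abs_add_le _ _) (abs_add_le _ _)).trans ?_)
    rw [abs_neg]
    linarith

lemma bar_le_div {s : ℝ} (hs : 0 < s) (x : ℝ) : bar s x ≤ 2 / (1 + |x| ^ (1 + 2*s)) := by
  have h1 := bar_le_one hs x
  have hb := bar_pos s x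
  rw [le_div_iff₀ (by positivity)]
  have h2 : bar s x * |x| ^ (1 + 2*s) ≤ 1 := by
    rcases eq_or_ne x 0 with rfl | h
    · rw [abs_zero, Real.zero_rpow (by linarith)]; simp
    · have hx : 0 < |x| := abs_pos.2 h
      have := bar_le_abs hs h
      rw [Real.rpow_neg hx.le] at this
      have hp : 0 < |x| ^ (1 + 2*s) := Real.rpow_pos_of_pos hx _
      calc bar s x * |x| ^ (1 + 2*s) ≤ (|x| ^ (1 + 2*s))⁻¹ * |x| ^ (1 + 2*s) := by gcongr
        _ = 1 := inv_mul_cancel₀ hp.ne'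
  linarith

/-- **Behavior of the corrector `ψ` (Lemma 6.4).** Under (W), for the bounded `C^{3,β}`
corrector `ψ` associated with `L` there are `K₂` and `K₃ > 0` (depending on `L`) with:
for `s ≥ 1/2`, `|ψ(x) − K₂ x/|x|^{1+2s}| ≤ K₃/|x|^{1+2s}` for `|x| ≥ 1`; and for every
`s ∈ (0,1)` and all `x`, `|ψ'(x)| ≤ K₃/(1+|x|^{1+2s})` and `|ψ''(x)| ≤ K₃/(1+|x|^{1+2s})`. -/
theorem corrector_behavior
    (s : ℝ) (hs : s ∈ Set.Ioo (0:ℝ) 1)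
    (W : ℝ → ℝ) (hW : WAssump s W)
    (φ : ℝ → ℝ) (hφ : IsLayerSolution s W φ)
    (L : ℝ) (ψ : ℝ → ℝ) (hψ : IsCorrector s L W φ ψ) :
    ∃ K₂ K₃ : ℝ, 0 < K₃ ∧
      (1/2 ≤ s → ∀ x : ℝ, 1 ≤ |x| →
        |ψ x - K₂ * x / |x| ^ (1 + 2*s)| ≤ K₃ / |x| ^ (1 + 2*s)) ∧
      (∀ x : ℝ,
        |deriv ψ x| ≤ K₃ / (1 + |x| ^ (1 + 2*s)) ∧
        |iteratedDeriv 2 ψ x| ≤ K₃ / (1 + |x| ^ (1 + 2*s))) := by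
  obtain ⟨K, R, D⟩ := layerData_exists hs hW hφ
  obtain ⟨K', hK', hd1, hd2⟩ := corrector_deriv_decay hs hW D hψ
  have h0 := hs.1
  have hd : ∀ K₃, 2 * K' ≤ K₃ → ∀ x : ℝ, |deriv ψ x| ≤ K₃ / (1 + |x| ^ (1 + 2*s)) ∧
      |iteratedDeriv 2 ψ x| ≤ K₃ / (1 + |x| ^ (1 + 2*s)) := by
    intro K₃ hK₃ x
    have hb : K' * bar s x ≤ K₃ / (1 + |x| ^ (1 + 2*s)) := by
      refine (mul_le_mul_of_nonneg_left (bar_le_div h0 x) hK'.le).trans ?_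
      rw [mul_div_assoc', mul_comm K' 2]
      gcongr
    rw [iteratedDeriv_succ, iteratedDeriv_one]
    exact ⟨(hd1 x).trans hb, (hd2 x).trans hb⟩
  by_cases hs2 : 1/2 ≤ s
  · obtain ⟨K₂, K₄, h⟩ := corrector_asymp hs hs2 hW hφ D hψ
    refine ⟨K₂, 2 * K' + |K₄| + |K₂| * 2, by positivity, fun _ x hx => ?_,
      hd _ (by linarith [abs_nonneg K₄, abs_nonneg K₂])⟩
    have hxx : 0 < |x| := by linarith
    have hp : 0 < |x| ^ (-(1 + 2*s)) := Real.rpow_pos_of_pos hxx _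
    have e : ∀ a, a / |x| ^ (1 + 2*s) = a * |x| ^ (-(1 + 2*s)) := fun a => by
      rw [Real.rpow_neg hxx.le, div_eq_mul_inv]
    rw [e, e]
    have k1 : |ψ x - K₂ * oddProf s x| ≤ |K₄| * |x| ^ (-(1 + 2*s)) :=
      (h x).trans (mul_le_mul (le_abs_self _) (bar_le_abs h0 (abs_pos.1 hxx)) (bar_pos s x).le
        (abs_nonneg _))
    have k2 := mul_le_mul_of_nonneg_left (oddProf_sub_le hs hx) (abs_nonneg K₂)
    rw [← abs_mul] at k2
    have e2 : ψ x - K₂ * x * |x| ^ (-(1 + 2*s)) = (ψ x - K₂ * oddProf s x)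
        + K₂ * (oddProf s x - x * |x| ^ (-(1 + 2*s))) := by ring
    rw [e2]
    refine (abs_add_le _ _).trans ?_
    have : 0 < 2 * K' * |x| ^ (-(1 + 2*s)) := by positivity
    linarith
  · exact ⟨0, 2 * K', by positivity, fun h => absurd h hs2, hd _ le_rfl⟩
end

section
/- Claim 1 (series limits). Let s ∈ (0,1), i₀ ∈ ℤ, γ ∈ (−1/2, 1/2] and x = i₀ + γ. Then: (a) the limit lim_{n→∞} Σ_{i=−n, i≠i₀}^n (x−i)/|x−i|^{1+2s} exists and equals Σ_{i=1}^∞ ((i+γ)^{−2s} − (i−γ)^{−2s}), an absolutely convergent series, and there is a constant C depending only on s such that the absolute value of this limit is at most C|γ| for every γ ∈ (−1/2,1/2]; (b) Σ_{i=−n}^{i₀−1} 1/|x−i|^{1+2s} → Σ_{i=1}^∞ 1/(i+γ)^{1+2s} as n → ∞; (c) Σ_{i=i₀+1}^{n} 1/|x−i|^{1+2s} → Σ_{i=1}^∞ 1/(i−γ)^{1+2s} as n → ∞. -/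
/-!
Put `y = j + 1 ± γ`. Reindexing by the distance from `i₀`, the indices `i = i₀ - 1 - j` give
`x - i = j + 1 + γ` and the indices `i = i₀ + 1 + j` give `x - i = -(j + 1 - γ)`, so each sum in the
statement is a partial sum of a series over `j : ℕ`, of length `n + i₀` on the left of `i₀` and
`n - i₀` on the right. Parts (b) and (c) are then the convergence of shifted `p`-series
with exponent `1 + 2s > 1`.

In part (a) the two one-sided series of `y ^ (-2s)` may diverge, and their partial sums have different
lengths. Changing the length of a partial sum by a fixed integer changes it by a
fixed number of terms tending to zero (`tendsto_sum_shift_sub`), so both lengths may be replaced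
by `n`, and the difference becomes a partial sum of the paired series. The mean value inequality
bounds its `j`-th term by `4s |γ| (j + 1/2) ^ (-(1 + 2s))` (`abs_pair_le`), which gives absolute convergence and
the linear bound in `γ`.
-/

open Filter

/-- Indices left of `i₀`, listed by their distance from `i₀`. -/
lemma sum_left (F : ℤ → ℝ) (i₀ : ℤ) (n : ℕ) :
    ∑ i ∈ Finset.Icc (-(n:ℤ)) (i₀ - 1), F i
      = ∑ j ∈ Finset.range ((n:ℤ) + i₀).toNat, F (i₀ - 1 - j) := by
  refine Finset.sum_nbij' (fun i => (i₀ - 1 - i).toNat) (fun j => i₀ - 1 - (j:ℤ)) ?_ ?_ ?_ ?_ ?_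
  · intro i hi; simp only [Finset.mem_Icc, Finset.mem_range] at *; omega
  · intro i hi; simp only [Finset.mem_Icc, Finset.mem_range] at *; omega
  · intro i hi; simp only [Finset.mem_Icc] at *; omega
  · intro i hi; simp only [Finset.mem_range] at *; omega
  · intro i hi; simp only [Finset.mem_Icc] at hi; congr 1; omega

/-- Indices right of `i₀`, listed by their distance from `i₀`. -/
lemma sum_right (F : ℤ → ℝ) (i₀ : ℤ) (n : ℕ) :
    ∑ i ∈ Finset.Icc (i₀ + 1) (n:ℤ), F i
      = ∑ j ∈ Finset.range ((n:ℤ) + -i₀).toNat, F (i₀ + 1 + j) := by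
  refine Finset.sum_nbij' (fun i => (i - (i₀ + 1)).toNat) (fun j => i₀ + 1 + (j:ℤ)) ?_ ?_ ?_ ?_ ?_
  · intro i hi; simp only [Finset.mem_Icc, Finset.mem_range] at *; omega
  · intro i hi; simp only [Finset.mem_Icc, Finset.mem_range] at *; omega
  · intro i hi; simp only [Finset.mem_Icc] at *; omega
  · intro i hi; simp only [Finset.mem_range] at *; omega
  · intro i hi; simp only [Finset.mem_Icc] at hi; congr 1; omega

lemma sum_erase_split (F : ℤ → ℝ) (i₀ : ℤ) (n : ℕ) (h : i₀.natAbs ≤ n) :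
    ∑ i ∈ (Finset.Icc (-(n:ℤ)) (n:ℤ)).erase i₀, F i
      = ∑ i ∈ Finset.Icc (-(n:ℤ)) (i₀ - 1), F i + ∑ i ∈ Finset.Icc (i₀ + 1) (n:ℤ), F i := by
  rw [← Finset.sum_union]
  · congr 1
    ext i
    simp only [Finset.mem_erase, Finset.mem_Icc, Finset.mem_union]
    omega
  · rw [Finset.disjoint_left]
    intro i
    simp only [Finset.mem_Icc]
    omega

lemma tendsto_toNat_shift (k : ℤ) : Tendsto (fun n : ℕ => ((n:ℤ) + k).toNat) atTop atTop := by
  rw [tendsto_atTop]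
  intro b
  filter_upwards [eventually_ge_atTop (b + k.natAbs)] with n hn
  omega

lemma tendsto_sum_add_sub (a : ℕ → ℝ) (ha : Tendsto a atTop (nhds 0)) (k : ℕ) :
    Tendsto (fun n : ℕ => ∑ j ∈ Finset.range (n + k), a j - ∑ j ∈ Finset.range n, a j)
      atTop (nhds 0) := by
  simp only [Finset.sum_range_add, add_sub_cancel_left]
  have := tendsto_finsetSum (Finset.range k)
    (fun j _ => (tendsto_add_atTop_iff_nat (f := a) j).2 ha)
  simpa using this

/-- Changing the length of the partial sums by a fixed integer is asymptotically harmless as soon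
as the terms tend to zero, even if the series diverges. -/
lemma tendsto_sum_shift_sub (a : ℕ → ℝ) (ha : Tendsto a atTop (nhds 0)) (k : ℤ) :
    Tendsto (fun n : ℕ => ∑ j ∈ Finset.range ((n:ℤ) + k).toNat, a j - ∑ j ∈ Finset.range n, a j)
      atTop (nhds 0) := by
  obtain ⟨l, rfl | rfl⟩ := k.eq_nat_or_neg
  · exact tendsto_sum_add_sub a ha l
  · rw [← tendsto_add_atTop_iff_nat l]
    have := (tendsto_sum_add_sub a ha l).neg
    simp only [neg_sub, neg_zero] at this
    refine this.congr fun n => ?_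
    have : (((n + l : ℕ) : ℤ) + -(l:ℤ)).toNat = n := by omega
    rw [this]

/-- Mean value inequality on `[t - 1/2, ∞)`, where `y ^ (-p)` has derivative at most
`p (t - 1/2) ^ (-(1 + p))` in absolute value. -/
lemma abs_pair_le (p : ℝ) (hp : 0 < p) (t γ : ℝ) (ht : 1 ≤ t) (h1 : -(1/2) ≤ γ) (h2 : γ ≤ 1/2) :
    |(t + γ) ^ (-p) - (t - γ) ^ (-p)| ≤ 2 * p * (1 / |t - 1/2| ^ (1 + p)) * |γ| := by
  have key := Convex.norm_image_sub_le_of_norm_hasDerivWithin_le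
    (f := fun y : ℝ => y ^ (-p)) (f' := fun y : ℝ => -p * y ^ (-p - 1))
    (s := Set.Ici (t - 1/2)) (x := t - γ) (y := t + γ) (C := p * (1 / |t - 1/2| ^ (1 + p)))
    (fun y hy => (Real.hasDerivAt_rpow_const (Or.inl (by
      have : t - 1/2 ≤ y := hy
      linarith))).hasDerivWithinAt)
    (fun y hy => by
      have hy : t - 1/2 ≤ y := hy
      have h0 : 0 < t - 1/2 := by linarith
      have hy0 : 0 < y := by linarith
      rw [norm_mul, Real.norm_eq_abs, Real.norm_eq_abs, abs_neg, abs_of_pos hp,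
        abs_of_pos (Real.rpow_pos_of_pos hy0 _), abs_of_pos h0, one_div, ← Real.rpow_neg h0.le,
        show -p - 1 = -(1 + p) by ring]
      exact mul_le_mul_of_nonneg_left
        (Real.rpow_le_rpow_of_nonpos h0 hy (by linarith)) hp.le)
    (convex_Ici _) (by simp only [Set.mem_Ici]; linarith) (by simp only [Set.mem_Ici]; linarith)
  rw [Real.norm_eq_abs, Real.norm_eq_abs, show t + γ - (t - γ) = 2 * γ by ring, abs_mul,
    abs_two] at key
  linarith

lemma div_rpow_one_add (y p : ℝ) (hy : 0 < y) : y / y ^ (1 + p) = y ^ (-p) := by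
  rw [Real.rpow_add hy, Real.rpow_one, Real.rpow_neg hy.le]
  field_simp

lemma summable_shift (p c : ℝ) (hp : 0 < p) (hc : -1 < c) :
    Summable (fun i : ℕ => 1 / ((i:ℝ) + 1 + c) ^ (1 + p)) := by
  refine ((Real.summable_one_div_nat_add_rpow (1 + c) (1 + p)).2 (by linarith)).congr fun i => ?_
  have : (0:ℝ) ≤ i := i.cast_nonneg
  rw [abs_of_pos (by linarith), add_assoc]

lemma tendsto_rpow_shift (p c : ℝ) (hp : 0 < p) :
    Tendsto (fun i : ℕ => ((i:ℝ) + 1 + c) ^ (-p)) atTop (nhds 0) := by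
  refine (tendsto_rpow_neg_atTop hp).comp ?_
  exact tendsto_atTop_add_const_right _ _
    (tendsto_atTop_add_const_right _ _ tendsto_natCast_atTop_atTop)

/-- **Claim 1 (series limits).** Let `s ∈ (0,1)`, `i₀ ∈ ℤ`, `γ ∈ (−1/2,1/2]`, `x = i₀ + γ`.
Then: (a) `Σ_{i=−n, i≠i₀}^n (x−i)/|x−i|^{1+2s}` converges as `n → ∞` to the absolutely
convergent series `Σ_{i≥1} ((i+γ)^{−2s} − (i−γ)^{−2s})`, whose absolute value is at most
`C|γ|` with `C = C(s)`; (b) `Σ_{i=−n}^{i₀−1} 1/|x−i|^{1+2s} → Σ_{i≥1} 1/(i+γ)^{1+2s}`;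
(c) `Σ_{i=i₀+1}^{n} 1/|x−i|^{1+2s} → Σ_{i≥1} 1/(i−γ)^{1+2s}`. -/
theorem claim1_series_limits (s : ℝ) (hs : s ∈ Set.Ioo (0:ℝ) 1) :
    ∃ C > (0:ℝ), ∀ (i₀ : ℤ) (γ : ℝ), γ ∈ Set.Ioc (-(1/2) : ℝ) (1/2) →
      ∀ x : ℝ, x = (i₀ : ℝ) + γ →
      -- (a)
      (Summable (fun i : ℕ =>
          |((i:ℝ) + 1 + γ) ^ (-(2*s)) - ((i:ℝ) + 1 - γ) ^ (-(2*s))|) ∧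
        Tendsto (fun n : ℕ =>
            ∑ i ∈ (Finset.Icc (-(n:ℤ)) (n:ℤ)).erase i₀,
              (x - (i:ℝ)) / |x - (i:ℝ)| ^ (1 + 2*s))
          atTop
          (nhds (∑' i : ℕ, (((i:ℝ) + 1 + γ) ^ (-(2*s)) - ((i:ℝ) + 1 - γ) ^ (-(2*s))))) ∧
        |∑' i : ℕ, (((i:ℝ) + 1 + γ) ^ (-(2*s)) - ((i:ℝ) + 1 - γ) ^ (-(2*s)))| ≤ C * |γ|) ∧
      -- (b)
      Tendsto (fun n : ℕ =>
          ∑ i ∈ Finset.Icc (-(n:ℤ)) (i₀ - 1), 1 / |x - (i:ℝ)| ^ (1 + 2*s))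
        atTop (nhds (∑' i : ℕ, 1 / ((i:ℝ) + 1 + γ) ^ (1 + 2*s))) ∧
      -- (c)
      Tendsto (fun n : ℕ =>
          ∑ i ∈ Finset.Icc (i₀ + 1) (n:ℤ), 1 / |x - (i:ℝ)| ^ (1 + 2*s))
        atTop (nhds (∑' i : ℕ, 1 / ((i:ℝ) + 1 - γ) ^ (1 + 2*s))) := by
  obtain ⟨hs0, -⟩ := hs
  have hp : 0 < 2 * s := by linarith
  have hsum := summable_shift (2 * s) (-(1/2)) hp (by norm_num)
  set T : ℝ := ∑' i : ℕ, 1 / ((i:ℝ) + 1 + -(1/2)) ^ (1 + 2*s) with hT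
  have hT0 : 0 ≤ T := tsum_nonneg fun i => by
    have : (0:ℝ) ≤ i := i.cast_nonneg
    exact div_nonneg zero_le_one (Real.rpow_nonneg (by linarith) _)
  -- Only `0 ≤ T` is known here; the summand `1` makes the constant positive.
  refine ⟨2 * (2 * s) * T + 1, by positivity, ?_⟩
  intro i₀ γ ⟨hγ1, hγ2⟩ x hx
  have hl : ∀ j : ℕ, x - ((i₀ - 1 - (j:ℤ) : ℤ) : ℝ) = (j:ℝ) + 1 + γ := by
    intro j; rw [hx]; push_cast; ring
  have hr : ∀ j : ℕ, x - ((i₀ + 1 + (j:ℤ) : ℤ) : ℝ) = -((j:ℝ) + 1 - γ) := by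
    intro j; rw [hx]; push_cast; ring
  have hlp : ∀ j : ℕ, 0 < (j:ℝ) + 1 + γ := fun j => by
    have : (0:ℝ) ≤ j := j.cast_nonneg
    linarith
  have hrp : ∀ j : ℕ, 0 < (j:ℝ) + 1 - γ := fun j => by
    have : (0:ℝ) ≤ j := j.cast_nonneg
    linarith
  have hb : ∀ i : ℕ, |((i:ℝ) + 1 + γ) ^ (-(2*s)) - ((i:ℝ) + 1 - γ) ^ (-(2*s))|
      ≤ 2 * (2 * s) * (1 / ((i:ℝ) + 1 + -(1/2)) ^ (1 + 2*s)) * |γ| := fun i => by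
    have h0 : (0:ℝ) ≤ i := i.cast_nonneg
    have := abs_pair_le (2 * s) hp ((i:ℝ) + 1) γ (by linarith) hγ1.le hγ2
    rwa [abs_of_pos (a := (i:ℝ) + 1 - 1/2) (by linarith), sub_eq_add_neg ((i:ℝ) + 1) (1/2)] at this
  have hmaj := (hsum.mul_left (2 * (2 * s))).mul_right |γ|
  have habs : Summable (fun i : ℕ =>
      |((i:ℝ) + 1 + γ) ^ (-(2*s)) - ((i:ℝ) + 1 - γ) ^ (-(2*s))|) :=
    Summable.of_nonneg_of_le (fun _ => abs_nonneg _) hb hmaj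
  refine ⟨⟨habs, ?_, ?_⟩, ?_, ?_⟩
  · have ha := tendsto_sum_shift_sub _ (tendsto_rpow_shift (2 * s) γ hp) i₀
    have hb' := tendsto_sum_shift_sub _ (tendsto_rpow_shift (2 * s) (-γ) hp) (-i₀)
    have hm := habs.of_abs.hasSum.tendsto_sum_nat
    have hlim := (ha.sub hb').add hm
    rw [sub_zero, zero_add] at hlim
    refine hlim.congr' ?_
    filter_upwards [eventually_ge_atTop i₀.natAbs] with n hn
    rw [sum_erase_split _ _ _ hn, sum_left, sum_right]
    have e1 : ∀ j : ℕ, (x - ((i₀ - 1 - (j:ℤ) : ℤ) : ℝ)) / |x - ((i₀ - 1 - (j:ℤ) : ℤ) : ℝ)| ^ (1 + 2*s)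
        = ((j:ℝ) + 1 + γ) ^ (-(2*s)) := fun j => by
      rw [hl, abs_of_pos (hlp j), div_rpow_one_add _ _ (hlp j)]
    have e2 : ∀ j : ℕ, (x - ((i₀ + 1 + (j:ℤ) : ℤ) : ℝ)) / |x - ((i₀ + 1 + (j:ℤ) : ℤ) : ℝ)| ^ (1 + 2*s)
        = -((j:ℝ) + 1 - γ) ^ (-(2*s)) := fun j => by
      rw [hr, abs_neg, abs_of_pos (hrp j), neg_div, div_rpow_one_add _ _ (hrp j)]
    simp only [e1, e2, Finset.sum_sub_distrib, Finset.sum_neg_distrib, ← sub_eq_add_neg]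
    ring
  · have h1 := norm_tsum_le_tsum_norm (f := fun i : ℕ =>
      ((i:ℝ) + 1 + γ) ^ (-(2*s)) - ((i:ℝ) + 1 - γ) ^ (-(2*s))) habs
    have h2 := habs.tsum_le_tsum hb hmaj
    rw [tsum_mul_right, tsum_mul_left, ← hT] at h2
    simp only [Real.norm_eq_abs] at h1
    have := abs_nonneg γ
    linarith
  · refine ((summable_shift (2 * s) γ hp (by linarith)).hasSum.tendsto_sum_nat.comp
      (tendsto_toNat_shift i₀)).congr fun n => ?_
    rw [sum_left]
    refine Finset.sum_congr rfl fun j _ => ?_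
    rw [hl, abs_of_pos (hlp j)]
  · have h := (summable_shift (2 * s) (-γ) hp (by linarith)).hasSum.tendsto_sum_nat.comp
      (tendsto_toNat_shift (-i₀))
    simp only [← sub_eq_add_neg] at h
    refine h.congr fun n => ?_
    rw [sum_right, ← sub_eq_add_neg]
    refine Finset.sum_congr rfl fun j _ => ?_
    rw [hr, abs_neg, abs_of_pos (hrp j)]
end

section
/- Claim 2, second estimate. Let s ∈ (0,1), p₀ ≠ 0 and δ > 0 with 1/(δ|p₀|) ≥ 2, set R := 1/(2δ|p₀|), and let τ : ℝ → [0,1] be a smooth function with τ = 1 on [−R,R] and τ = 0 outside [−2R,2R]. Let i₀ ∈ ℤ, γ ∈ (−1/2,1/2], x = i₀ + γ, and x_i := (x−i)/(δ|p₀|). Then for every n, Σ over i ∈ {−n,…,n} with i ∉ {i₀−1, i₀, i₀+1} of |I[τ](x_i)| is at most C δ^{2s}, where I[τ](x_i) = C(1,s) ∫_ℝ τ(y)/|x_i − y|^{1+2s} dy (note τ(x_i) = 0 for such i, so this equals −(−Δ)^sτ(x_i)), and C is independent of x, γ, δ and n. -/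
/-!
Write `a = δ|p₀|`, so that `τ` is supported in `[-1/a, 1/a]` and `x_i = (k + γ)/a` with
`k = i₀ - i`. For `|k| ≥ 2` and `|y| ≤ 1/a` one has
`|x_i - y| ≥ (|k| - 3/2)/a ≥ |k|/(4a)`, hence
`∫ τ(y)/|x_i - y|^{1+2s} dy ≤ (2/a) (|k|/(4a))^{-(1+2s)} = 2·4^{1+2s} |k|^{-(1+2s)} a^{2s}`
(`integral_cutoff_le`). Since `1 + 2s > 1`, the sum over `k` is bounded by the convergent series
`∑_{k ∈ ℤ} |k|^{-(1+2s)}`, and `a^{2s} = |p₀|^{2s} δ^{2s}`.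
-/

open MeasureTheory Filter Metric Set

/-- The size of the nonlocal term at distance about `|k|/a` from a cutoff supported in
`[-1/a, 1/a]`: the kernel is at most `(|k|/(4a))^{-(1+2s)}` on an interval of length `2/a`. -/
lemma integral_cutoff_le {s a γ : ℝ} {k : ℤ} {τc : ℝ → ℝ} (hs : 0 < s) (ha : 0 < a)
    (hγ : |γ| ≤ 1 / 2) (hk : 2 ≤ |k|) (h01 : ∀ x, 0 ≤ τc x ∧ τc x ≤ 1)
    (h0 : ∀ x, 1 / a ≤ |x| → τc x = 0) :
    |∫ y : ℝ, τc y / |((k : ℝ) + γ) / a - y| ^ (1 + 2 * s)|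
      ≤ 2 * 4 ^ (1 + 2 * s) * a ^ (2 * s) * |(k : ℝ)| ^ (-(1 + 2 * s)) := by
  have hk' : (2 : ℝ) ≤ |(k : ℝ)| := by exact_mod_cast hk
  have hK : 0 < |(k : ℝ)| := by linarith
  have hdist : ∀ y ∈ Set.Icc (-(1 / a)) (1 / a), |(k : ℝ)| / (4 * a) ≤ |((k : ℝ) + γ) / a - y| := by
    intro y hy
    have hy' : |y * a| ≤ 1 := by
      rw [abs_mul, abs_of_pos ha, ← le_div_iff₀ ha]
      exact abs_le.2 hy
    have e : ((k : ℝ) + γ) / a - y = ((k : ℝ) + γ - y * a) / a := by field_simp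
    rw [e, abs_div, abs_of_pos ha, ← div_div]
    gcongr
    have h1 : |(k : ℝ)| ≤ |(k : ℝ) + γ - y * a| + |γ| + |y * a| := by
      calc |(k : ℝ)| = |((k : ℝ) + γ - y * a) + (-γ) + y * a| := by ring_nf
        _ ≤ _ := by
          have := abs_add_three ((k : ℝ) + γ - y * a) (-γ) (y * a)
          rwa [abs_neg] at this
    linarith
  rw [← setIntegral_eq_integral_of_forall_compl_eq_zero (s := Set.Icc (-(1 / a)) (1 / a))]
  · have hb := norm_setIntegral_le_of_norm_le_const (μ := volume)
      (s := Set.Icc (-(1 / a)) (1 / a))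
      (f := fun y => τc y / |((k : ℝ) + γ) / a - y| ^ (1 + 2 * s))
      (C := 1 / (|(k : ℝ)| / (4 * a)) ^ (1 + 2 * s)) (by simp) (by
        intro y hy
        have hpos : 0 < |(k : ℝ)| / (4 * a) := by positivity
        rw [Real.norm_eq_abs, abs_of_nonneg (div_nonneg (h01 y).1 (by positivity))]
        exact div_le_div₀ zero_le_one (h01 y).2 (by positivity)
          (Real.rpow_le_rpow hpos.le (hdist y hy) (by linarith)))
    rw [Real.norm_eq_abs] at hb
    refine hb.trans (le_of_eq ?_)
    have hv : volume.real (Set.Icc (-(1 / a)) (1 / a)) = 2 / a := by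
      rw [Real.volume_real_Icc_of_le (by have : 0 < 1 / a := by positivity
                                         linarith)]
      ring
    rw [hv, Real.div_rpow hK.le (by positivity), Real.mul_rpow (by norm_num) ha.le,
      Real.rpow_neg hK.le, Real.rpow_add ha 1, Real.rpow_one]
    have := Real.rpow_pos_of_pos hK (1 + 2 * s)
    field_simp
  · intro y hy
    rw [h0 y, zero_div]
    by_contra hlt
    exact hy (abs_le.1 (not_le.1 hlt).le)

/-- **Claim 2, second estimate.** For `s ∈ (0,1)`, `p₀ ≠ 0`, `1/(δ|p₀|) ≥ 2`,
`R = 1/(2δ|p₀|)`, and `τ` a smooth cutoff (`τ = 1` on `[−R,R]`, `τ = 0` outside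
`[−2R,2R]`), with `x_i = (x−i)/(δ|p₀|)`: for every `n`,
`Σ_{i=−n, i∉{i₀−1,i₀,i₀+1}}^n |I[τ](x_i)| ≤ C δ^{2s}`, where
`I[τ](x_i) = C(1,s) ∫ τ(y)/|x_i − y|^{1+2s} dy` and `C` is independent of `x, γ, δ, n`. -/
theorem claim2_second_estimate
    (s : ℝ) (hs : s ∈ Set.Ioo (0:ℝ) 1) (p₀ : ℝ) (hp₀ : p₀ ≠ 0) :
    ∃ C > (0:ℝ), ∀ δ : ℝ, 0 < δ → 2 ≤ 1 / (δ * |p₀|) →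
      ∀ τc : ℝ → ℝ, IsCutoff (1 / (2 * δ * |p₀|)) τc →
      ∀ (i₀ : ℤ) (γ : ℝ), γ ∈ Set.Ioc (-(1/2) : ℝ) (1/2) →
      ∀ x : ℝ, x = (i₀ : ℝ) + γ →
      ∀ n : ℕ,
        (∑ i ∈ (Finset.Icc (-(n:ℤ)) (n:ℤ)).filter
            (fun i => i ≠ i₀ - 1 ∧ i ≠ i₀ ∧ i ≠ i₀ + 1),
          |C1s s * ∫ y : ℝ, τc y / |(x - (i:ℝ)) / (δ * |p₀|) - y| ^ (1 + 2*s)|)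
        ≤ C * δ ^ (2*s) := by
  obtain ⟨hs0, -⟩ := hs
  have hsum : Summable fun k : ℤ => |(k : ℝ)| ^ (-(1 + 2 * s)) :=
    Real.summable_abs_int_rpow (by linarith)
  set S : ℝ := ∑' k : ℤ, |(k : ℝ)| ^ (-(1 + 2 * s)) with hS
  have hS0 : 0 ≤ S := tsum_nonneg fun k => by positivity
  -- The summand `1` only serves to make the constant strictly positive.
  refine ⟨|C1s s| * (2 * 4 ^ (1 + 2 * s) * |p₀| ^ (2 * s)) * S + 1, by positivity, ?_⟩
  intro δ hδ _ τc hτ i₀ γ hγ x hx n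
  have hp : 0 < |p₀| := abs_pos.2 hp₀
  have ha : 0 < δ * |p₀| := by positivity
  obtain ⟨-, h01, -, hτ0⟩ := hτ
  have h0 : ∀ x, 1 / (δ * |p₀|) ≤ |x| → τc x = 0 := by
    intro y hy
    apply hτ0
    convert hy using 1
    field_simp
  have hγ' : |γ| ≤ 1 / 2 := abs_le.2 ⟨hγ.1.le, hγ.2⟩
  set A : ℝ := |C1s s| * (2 * 4 ^ (1 + 2 * s) * (δ * |p₀|) ^ (2 * s)) with hA
  have hA0 : 0 ≤ A := by positivity
  have hsum' : Summable fun i : ℤ => |((i₀ - i : ℤ) : ℝ)| ^ (-(1 + 2 * s)) :=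
    (Equiv.subLeft i₀).summable_iff.2 hsum
  have htsum : ∑' i : ℤ, |((i₀ - i : ℤ) : ℝ)| ^ (-(1 + 2 * s)) = S :=
    (Equiv.subLeft i₀).tsum_eq fun k : ℤ => |(k : ℝ)| ^ (-(1 + 2 * s))
  calc _ ≤ ∑ i ∈ (Finset.Icc (-(n:ℤ)) (n:ℤ)).filter
            (fun i => i ≠ i₀ - 1 ∧ i ≠ i₀ ∧ i ≠ i₀ + 1),
            A * |((i₀ - i : ℤ) : ℝ)| ^ (-(1 + 2 * s)) := by
        refine Finset.sum_le_sum fun i hi => ?_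
        have hi' := (Finset.mem_filter.1 hi).2
        have hk : 2 ≤ |i₀ - i| := by
          rw [le_abs]
          omega
        have hb := integral_cutoff_le hs0 ha hγ' hk h01 h0
        have e : x - (i : ℝ) = ((i₀ - i : ℤ) : ℝ) + γ := by
          rw [hx]
          push_cast
          ring
        rw [e, abs_mul, hA, mul_assoc]
        exact mul_le_mul_of_nonneg_left hb (abs_nonneg _)
    _ = A * ∑ i ∈ (Finset.Icc (-(n:ℤ)) (n:ℤ)).filter
            (fun i => i ≠ i₀ - 1 ∧ i ≠ i₀ ∧ i ≠ i₀ + 1),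
            |((i₀ - i : ℤ) : ℝ)| ^ (-(1 + 2 * s)) := by rw [Finset.mul_sum]
    _ ≤ A * S := by
        gcongr
        rw [← htsum]
        exact hsum'.sum_le_tsum _ fun i _ => by positivity
    _ ≤ _ := by
        rw [hA, Real.mul_rpow hδ.le hp.le]
        have := Real.rpow_pos_of_pos hδ (2 * s)
        linarith
end
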